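/- Let 0 < R < 1 and let (C_k) be a sequence of Reed-Muller codes C_k = RM(m_k, d_k) with lengths n_k = 2^{m_k} → ∞ and rates R(C_k) → R. Then there exist a sequence of reals (R*_k) with R*_k → R and a constant K such that for all k and all 0 ≤ i ≤ n_k, the weight distribution of C_k satisfies a_i ≤ K · (1 - R*_k)^{-2·ln 2·i}. -/

import Mathlib

/-!
The sequence `Rs` is constant, equal to `R`. Put `θ = (1 - R) ^ (2 log 2)`. Since
`x ^ (2 log 2) < 2 ^ x - 1` on `(0, 1)` (`rpow_lt_two_rpow_sub_one`), there is `l < 1 - R` with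
`θ < 2 ^ l - 1`. The aim is `a_i * θ ^ i ≤ 1` for all codes of large length and rate close to `R`
(`RMW.core`); the finitely many remaining codes are absorbed by the constant `K`.

*Large weights.* Interpolating coordinate by coordinate, the weight enumerator
`∑ a_i (2 ^ l - 1) ^ i` is at most `2 ^ E`, where `E` is the expected number of coordinates that are
covered by codewords supported on a random erasure set of density `l` (`log_wenum_le`). By
translation invariance `E ≤ 2 ^ m * hh m d l`, where `hh m d l` is the probability that the value of a
codeword at the origin cannot be recovered when every other position is erased with probability
`l`. Hence `a_i * θ ^ i ≤ 1` as soon as `i` exceeds a constant multiple of `2 ^ m * hh m d l`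
(`large_weight`).

*The failure probability.* A dimension count gives `hh ≤ rate / (1 - l)` (`hh_le_rate`), which is
bounded away from `1`. If the origin is unrecoverable in `m + 1` variables, it is unrecoverable in
the restriction to each of two hyperplanes through it; averaging over pairs of hyperplanes and
expanding in biased Fourier coefficients of the failure event gives
`hh (m+1) ≤ ∑ T, fhat T ^ 2 / (|T| + 1)` (`hh_succ_le`). As `∑ T, fhat T ^ 2 = hh m`, each step gains
a constant factor (`hh_step_one`), and small-set expansion (`sse`) pushes the Fourier mass to large
`T` once `hh` is small, so that later steps gain an arbitrarily large factor (`hh_step_two`). The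
rate changes by `O(1 / √m)` when a variable is removed, so of order `√m` steps are available, and
`hh ≤ exp (-c √m log m)` (`hh_small`).

*Small weights.* A codeword of weight at most `2 ^ (m - j - 3)` is the majority vote of `2 m` of its
`j`-fold derivatives, each of which has degree `d - j` and lives on a space of dimension `m - j`.
This bounds the number of such codewords (`low_count`), and with a Chernoff bound for the
dimension of the derivatives it covers the weights not reached above (`small_weight`).
-/

open Finset Filter

/-- The rate of a binary linear code. -/
noncomputable def codeRate {ι : Type} [Fintype ι] (C : Submodule (ZMod 2) (ι → ZMod 2)) : ℝ :=
  (Module.finrank (ZMod 2) C : ℝ) / (Fintype.card ι : ℝ)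

/-- `weightEnum C i` is the number of codewords of Hamming weight `i`. -/
noncomputable def weightEnum {ι : Type} [Fintype ι] (C : Submodule (ZMod 2) (ι → ZMod 2))
    (i : ℕ) : ℕ :=
  Nat.card {x : ι → ZMod 2 // x ∈ C ∧ hammingNorm x = i}

/-- The permutation `π` of coordinates maps the code `C` onto itself. -/
def PreservesCode {ι : Type} [Fintype ι] (C : Submodule (ZMod 2) (ι → ZMod 2))
    (π : Equiv.Perm ι) : Prop :=
  ∀ x : ι → ZMod 2, x ∈ C ↔ x ∘ π ∈ C

/-- The automorphism group of `C` acts 2-transitively on coordinates. -/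
def DoublyTransitive {ι : Type} [Fintype ι] (C : Submodule (ZMod 2) (ι → ZMod 2)) : Prop :=
  ∀ i₁ j₁ i₂ j₂ : ι, i₁ ≠ j₁ → i₂ ≠ j₂ →
    ∃ π : Equiv.Perm ι, PreservesCode C π ∧ π i₁ = i₂ ∧ π j₁ = j₂

/-- Minimal distance: the least Hamming weight of a nonzero codeword. -/
noncomputable def minDist {ι : Type} [Fintype ι] (C : Submodule (ZMod 2) (ι → ZMod 2)) : ℕ :=
  sInf {d | ∃ x ∈ C, x ≠ 0 ∧ hammingNorm x = d}

/-- Reed-Muller code RM(m,d). -/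
noncomputable def ReedMuller (m d : ℕ) : Submodule (ZMod 2) ((Fin m → ZMod 2) → ZMod 2) :=
  Submodule.map
    (LinearMap.pi fun v : Fin m → ZMod 2 => (MvPolynomial.aeval v).toLinearMap)
    (MvPolynomial.restrictTotalDegree (Fin m) (ZMod 2) d)

open scoped Classical in
/-- ML block error probability on BSC(p). -/
noncomputable def Perr {ι : Type} [Fintype ι] (C : Submodule (ZMod 2) (ι → ZMod 2)) (p : ℝ) : ℝ :=
  ∑ z : ι → ZMod 2,
    if ∃ x ∈ C, x ≠ 0 ∧ hammingNorm (z + x) ≤ hammingNorm z then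
      p ^ hammingNorm z * (1 - p) ^ (Fintype.card ι - hammingNorm z) else 0

/-- Rank of the projection of `C` to the coordinates in `S`. -/
noncomputable def rankC {ι : Type} [Fintype ι] (C : Submodule (ZMod 2) (ι → ZMod 2))
    (S : Finset ι) : ℕ :=
  Module.finrank (ZMod 2)
    (C.map (LinearMap.funLeft (ZMod 2) (ZMod 2) (Subtype.val : {i // i ∈ S} → ι)))

/-- `f_C(S) = |S| - r_C(S)`. -/
noncomputable def fC {ι : Type} [Fintype ι] (C : Submodule (ZMod 2) (ι → ZMod 2))
    (S : Finset ι) : ℝ :=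
  (S.card : ℝ) - (rankC C S : ℝ)

/-- `μ_C(λ) = E_{S ~ λ} f_C(S)`. -/
noncomputable def muC {ι : Type} [Fintype ι] (C : Submodule (ZMod 2) (ι → ZMod 2)) (l : ℝ) : ℝ :=
  ∑ S : Finset ι, l ^ S.card * (1 - l) ^ (Fintype.card ι - S.card) * fC C S

/-- Bit erasure probability `P_{b,i}(p)`. -/
noncomputable def Pbi {ι : Type} [Fintype ι] [DecidableEq ι]
    (C : Submodule (ZMod 2) (ι → ZMod 2)) (i : ι) (p : ℝ) : ℝ :=
  ∑ R ∈ ((Finset.univ : Finset ι).erase i).powerset,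
    (1 - p) ^ R.card * p ^ (Fintype.card ι - R.card) *
      (if rankC C R < rankC C (insert i R) then (1 : ℝ) else 0)

/-- The average EXIT function `h(p)`. -/
noncomputable def exitAvg {ι : Type} [Fintype ι] [DecidableEq ι]
    (C : Submodule (ZMod 2) (ι → ZMod 2)) (p : ℝ) : ℝ :=
  (1 / (Fintype.card ι : ℝ)) * ∑ i : ι, Pbi C i p / p

/-- The dual code. -/
def dualCode {ι : Type} [Fintype ι] (C : Submodule (ZMod 2) (ι → ZMod 2)) :
    Submodule (ZMod 2) (ι → ZMod 2) where
  carrier := {y | ∀ x ∈ C, ∑ i, x i * y i = 0}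
  zero_mem' := by intro x hx; simp
  add_mem' := by
    intro y z hy hz x hx
    simp only [Pi.add_apply, mul_add, Finset.sum_add_distrib, Set.mem_setOf_eq] at *
    rw [hy x hx, hz x hx, add_zero]
  smul_mem' := by
    intro c y hy x hx
    simp only [Pi.smul_apply, smul_eq_mul]
    rw [show (∑ i, x i * (c * y i)) = c * ∑ i, x i * y i by rw [Finset.mul_sum]; congr 1; funext i; ring, hy x hx, mul_zero]

/-! ### Expectations over product Bernoulli measures -/

namespace RMW

/-- The probability that a Bernoulli variable of parameter `l` equals `b`. -/
def bw (l : ℝ) (b : Bool) : ℝ := if b then l else 1 - l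

/-- The expectation of `F` over `s : ι → Bool` with independent Bernoulli(`l`) coordinates. -/
noncomputable def ev (l : ℝ) {ι : Type} [Fintype ι] [DecidableEq ι] (F : (ι → Bool) → ℝ) : ℝ :=
  ∑ s : ι → Bool, (∏ x, bw l (s x)) * F s

section ev
variable {l : ℝ} {ι κ : Type} [Fintype ι] [DecidableEq ι] [Fintype κ] [DecidableEq κ]

lemma bw_nonneg (h0 : 0 ≤ l) (h1 : l ≤ 1) (b : Bool) : 0 ≤ bw l b := by
  unfold bw; split_ifs <;> linarith

lemma sum_prod_bool (g : ι → Bool → ℝ) :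
    ∑ s : ι → Bool, ∏ x, g x (s x) = ∏ x, ∑ b, g x b := by
  rw [Finset.prod_univ_sum, Fintype.piFinset_univ]

lemma sum_bw : ∑ b, bw l b = 1 := by simp [bw]

lemma ev_const (c : ℝ) : ev l (fun _ : ι → Bool => c) = c := by
  unfold ev
  rw [← Finset.sum_mul, sum_prod_bool (fun _ b => bw l b),
    Finset.prod_congr rfl fun _ _ => sum_bw]
  simp

lemma ev_mono (h0 : 0 ≤ l) (h1 : l ≤ 1) {F G : (ι → Bool) → ℝ} (h : ∀ s, F s ≤ G s) :
    ev l F ≤ ev l G :=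
  Finset.sum_le_sum fun s _ =>
    mul_le_mul_of_nonneg_left (h s) (Finset.prod_nonneg fun _ _ => bw_nonneg h0 h1 _)

lemma ev_nonneg (h0 : 0 ≤ l) (h1 : l ≤ 1) {F : (ι → Bool) → ℝ} (h : ∀ s, 0 ≤ F s) :
    0 ≤ ev l F := by
  simpa [ev_const] using ev_mono h0 h1 h

lemma ev_sum_comm {α : Type} (A : Finset α) (F : α → (ι → Bool) → ℝ) :
    ev l (fun s => ∑ a ∈ A, F a s) = ∑ a ∈ A, ev l (F a) := by
  unfold ev
  rw [Finset.sum_comm]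
  simp [Finset.mul_sum]

lemma ev_mul_left (c : ℝ) (F : (ι → Bool) → ℝ) : ev l (fun s => c * F s) = c * ev l F := by
  unfold ev
  rw [Finset.mul_sum]
  exact Finset.sum_congr rfl fun s _ => by ring

lemma ev_equiv (e : ι ≃ κ) (F : (ι → Bool) → ℝ) :
    ev l (fun S : κ → Bool => F (S ∘ e)) = ev l F := by
  unfold ev
  refine Fintype.sum_equiv (e.arrowCongr (Equiv.refl Bool)).symm _ _ fun s => ?_
  congr 1
  exact (Equiv.prod_comp e (fun y => bw l (s y))).symm

lemma ev_sum (F : (ι ⊕ κ → Bool) → ℝ) :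
    ev l F = ev l (fun s : ι → Bool => ev l (fun t : κ → Bool => F (Sum.elim s t))) := by
  unfold ev
  simp_rw [Finset.mul_sum]
  rw [← Finset.sum_product', Finset.univ_product_univ]
  refine Fintype.sum_equiv (Equiv.sumArrowEquivProdArrow ι κ Bool) _ _ fun s => ?_
  simp [Fintype.prod_sum_type, Equiv.sumArrowEquivProdArrow, mul_assoc]

/-- Marginalisation: pulling a product measure back along an injection of index sets. -/
lemma ev_inj {i : ι → κ} (hi : Function.Injective i) (F : (ι → Bool) → ℝ) :
    ev l (fun S : κ → Bool => F (S ∘ i)) = ev l F := by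
  classical
  let e : ι ⊕ {u // u ∉ Set.range i} ≃ κ :=
    (Equiv.sumCongr (Equiv.ofInjective i hi) (Equiv.refl _)).trans
      (Equiv.Set.sumCompl (Set.range i))
  have he : ∀ x, e (Sum.inl x) = i x := fun x => rfl
  have h1 := ev_equiv (l := l) e
    (fun s : ι ⊕ {u // u ∉ Set.range i} → Bool => F (s ∘ Sum.inl))
  have h2 : (fun S : κ → Bool => F ((S ∘ e) ∘ Sum.inl)) = fun S => F (S ∘ i) := by
    funext S; congr 1
  rw [h2] at h1
  rw [h1, ev_sum]
  simp only [Sum.elim_comp_inl, ev_const]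

/-- The pattern that agrees with `s` on `B` and with `t` off `B`. -/
def mix (B : Finset ι) (s t : ι → Bool) : ι → Bool := fun x => if x ∈ B then s x else t x

/-- The second moment of the conditional expectation of `f` given the coordinates in `B`,
written with two samples which share the coordinates in `B` and are independent off `B`. -/
noncomputable def condSq (l : ℝ) (f : (ι → Bool) → ℝ) (B : Finset ι) : ℝ :=
  ev l (fun s => ev l (fun t => f s * f (mix B s t)))

/-- Two embedded copies of `ι` which meet exactly in `B`, compatibly. -/
lemma ev_two_inj {i₁ i₂ : ι → κ} (h1 : Function.Injective i₁) (h2 : Function.Injective i₂)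
    (h12 : ∀ x y, i₁ x = i₂ y → x = y) (f : (ι → Bool) → ℝ) :
    ev l (fun S : κ → Bool => f (S ∘ i₁) * f (S ∘ i₂)) =
      condSq l f (univ.filter fun x => i₁ x = i₂ x) := by
  classical
  set B : Finset ι := univ.filter fun x => i₁ x = i₂ x with hB
  let j : ι ⊕ {x // x ∉ B} → κ := Sum.elim i₁ (fun x => i₂ x)
  have hj : Function.Injective j := by
    rintro (x | ⟨x, hx⟩) (y | ⟨y, hy⟩) h
    · simp only [j, Sum.elim_inl] at h; rw [h1 h]
    · simp only [j, Sum.elim_inl, Sum.elim_inr] at h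
      have := h12 _ _ h; subst this
      exact absurd (by simp [hB, h]) hy
    · simp only [j, Sum.elim_inl, Sum.elim_inr] at h
      have := h12 _ _ h.symm; subst this
      exact absurd (by simp [hB, h]) hx
    · simp only [j, Sum.elim_inr] at h
      have := h2 h; subst this; rfl
  have key := ev_inj (l := l) hj (fun s => f (s ∘ Sum.inl) *
    f (fun x => if h : x ∈ B then s (Sum.inl x) else s (Sum.inr ⟨x, h⟩)))
  have e1 : (fun S : κ → Bool => f (S ∘ i₁) * f (S ∘ i₂)) = fun S => f ((S ∘ j) ∘ Sum.inl) *
    f (fun x => if h : x ∈ B then (S ∘ j) (Sum.inl x) else (S ∘ j) (Sum.inr ⟨x, h⟩)) := by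
    funext S
    congr 2
    funext x
    by_cases hx : x ∈ B
    · have : i₁ x = i₂ x := by simpa [hB] using hx
      simp [hx, j, this]
    · simp [hx, j]
  rw [e1, key, ev_sum]
  unfold condSq
  congr 1
  funext s
  have := ev_inj (l := l) (ι := {x // x ∉ B}) (κ := ι) Subtype.val_injective
    (fun t => f s * f (fun x => if h : x ∈ B then s x else t ⟨x, h⟩))
  simp only [Sum.elim_comp_inl, Sum.elim_inl, Sum.elim_inr]
  rw [← this]
  congr 1

/-- The orthonormal companion of `1` on a two-point space with weights `bw l`. -/
noncomputable def chi (l : ℝ) (b : Bool) : ℝ :=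
  if b then Real.sqrt ((1 - l) / l) else -Real.sqrt (l / (1 - l))

lemma chi_tt (h0 : 0 < l) (h1 : l < 1) : chi l true * chi l true = (1 - l) / l := by
  simp only [chi, if_true]
  exact Real.mul_self_sqrt (div_nonneg (by linarith) h0.le)

lemma chi_ff (h0 : 0 < l) (h1 : l < 1) : chi l false * chi l false = l / (1 - l) := by
  simp only [chi, Bool.false_eq_true, if_false, neg_mul_neg]
  exact Real.mul_self_sqrt (div_nonneg h0.le (by linarith))

lemma chi_tf (h0 : 0 < l) (h1 : l < 1) : chi l true * chi l false = -1 := by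
  have h : (1 - l) / l * (l / (1 - l)) = 1 := by
    have : 1 - l ≠ 0 := by linarith
    field_simp
  simp only [chi, Bool.false_eq_true, if_false, if_true, mul_neg]
  rw [← Real.sqrt_mul (div_nonneg (by linarith) h0.le), h, Real.sqrt_one]

/-- Reproducing kernel identity on the two-point space. -/
lemma bw_kernel (h0 : 0 < l) (h1 : l < 1) (a b : Bool) :
    bw l a * bw l b * (1 + chi l a * chi l b) = if a = b then bw l b else 0 := by
  have h1' : 1 - l ≠ 0 := by linarith
  cases a <;> cases b
  · rw [chi_ff h0 h1]; simp [bw]; field_simp; ring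
  · rw [mul_comm (chi l false), chi_tf h0 h1]; simp [bw]
  · rw [chi_tf h0 h1]; simp [bw]
  · rw [chi_tt h0 h1]; simp [bw]; field_simp; ring

/-- The biased Fourier coefficient of `f` at `T`. -/
noncomputable def fhat (l : ℝ) (f : (ι → Bool) → ℝ) (T : Finset ι) : ℝ :=
  ev l (fun s => f s * ∏ x ∈ T, chi l (s x))

/-- Parseval for the conditional expectation onto the coordinates in `B`. -/
lemma condSq_eq (h0 : 0 < l) (h1 : l < 1) (f : (ι → Bool) → ℝ) (B : Finset ι) :
    condSq l f B = ∑ T ∈ B.powerset, fhat l f T ^ 2 := by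
  have inner : ∀ s : ι → Bool, (∏ x, bw l (s x)) * ev l (fun t => f s * f (mix B s t)) =
      ∑ u : ι → Bool, (∏ x, bw l (s x)) * f s * ((∏ x, bw l (u x)) * f u) *
        ∏ x ∈ B, (1 + chi l (s x) * chi l (u x)) := by
    intro s
    have step : ∀ t : ι → Bool, (∏ x, bw l (t x)) * (f s * f (mix B s t)) =
        ∑ u : ι → Bool, f s * f u *
          ∏ x, (bw l (t x) * if (if x ∈ B then s x else t x) = u x then 1 else 0) := by
      intro t
      rw [Finset.sum_eq_single (mix B s t)]
      · simp [mix]; ring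
      · intro u _ hu
        obtain ⟨x, hx⟩ := Function.ne_iff.mp hu
        rw [Finset.prod_eq_zero (Finset.mem_univ x), mul_zero]
        rw [if_neg, mul_zero]
        exact fun h => hx h.symm
      · simp
    unfold ev
    rw [Finset.sum_congr rfl fun t _ => step t, Finset.sum_comm, Finset.mul_sum]
    refine Finset.sum_congr rfl fun u _ => ?_
    rw [← Finset.mul_sum, sum_prod_bool
      (fun x b => bw l b * if (if x ∈ B then s x else b) = u x then 1 else 0)]
    have e : ∏ x, ∑ b, bw l b * (if (if x ∈ B then s x else b) = u x then (1:ℝ) else 0) =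
        ∏ x, (if x ∈ B then (if s x = u x then 1 else 0) else bw l (u x)) := by
      refine Finset.prod_congr rfl fun x _ => ?_
      by_cases hx : x ∈ B
      · simp only [hx, if_true]
        rw [← Finset.sum_mul, sum_bw, one_mul]
      · simp [hx]
    have e2 : (∏ x, bw l (s x)) * (∏ x, (if x ∈ B then (if s x = u x then 1 else 0)
        else bw l (u x))) = (∏ x, bw l (s x)) * (∏ x, bw l (u x)) *
        ∏ x ∈ B, (1 + chi l (s x) * chi l (u x)) := by
      rw [← Finset.prod_ite_mem_eq B (fun x => 1 + chi l (s x) * chi l (u x)),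
        ← Finset.prod_mul_distrib, ← Finset.prod_mul_distrib, ← Finset.prod_mul_distrib]
      refine Finset.prod_congr rfl fun x _ => ?_
      by_cases hx : x ∈ B
      · simp only [hx, if_true]
        rw [bw_kernel h0 h1]
        by_cases h : s x = u x <;> simp [h]
      · simp [hx]
    rw [e]
    linear_combination (f s * f u) * e2
  have outer : condSq l f B =
      ∑ s : ι → Bool, (∏ x, bw l (s x)) * ev l (fun t => f s * f (mix B s t)) := rfl
  rw [outer, Finset.sum_congr rfl fun s _ => inner s]
  simp_rw [Finset.prod_one_add, Finset.mul_sum]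
  rw [Finset.sum_congr rfl fun s _ => Finset.sum_comm, Finset.sum_comm]
  refine Finset.sum_congr rfl fun T _ => ?_
  rw [sq]
  unfold fhat ev
  rw [Finset.sum_mul_sum]
  refine Finset.sum_congr rfl fun s _ => Finset.sum_congr rfl fun u _ => ?_
  rw [Finset.prod_mul_distrib]; ring

end ev
end RMW

/-! ### Small-set expansion on the biased cube -/

namespace RMW
section sse
variable {l : ℝ} {ι : Type} [Fintype ι] [DecidableEq ι]

/-- The noise-stability form with correlation parameter `r`, in kernel form. -/
noncomputable def stab (l r : ℝ) (f g : (ι → Bool) → ℝ) : ℝ :=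
  ev l (fun s => ev l (fun u => f s * g u * ∏ x, (1 + r * (chi l (s x) * chi l (u x)))))

lemma stab_eq (r : ℝ) (f g : (ι → Bool) → ℝ) :
    stab l r f g = ∑ T : Finset ι, r ^ T.card * (fhat l f T * fhat l g T) := by
  unfold stab
  simp_rw [Finset.prod_one_add, Finset.powerset_univ, Finset.mul_sum, ev_sum_comm]
  refine Finset.sum_congr rfl fun T _ => ?_
  unfold fhat
  unfold ev
  rw [Finset.sum_mul_sum, Finset.mul_sum]
  refine Finset.sum_congr rfl fun s _ => ?_
  rw [Finset.mul_sum, Finset.mul_sum]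
  refine Finset.sum_congr rfl fun u _ => ?_
  simp only [Finset.prod_mul_distrib, Finset.prod_const]
  ring

lemma stab_comm (r : ℝ) (f g : (ι → Bool) → ℝ) : stab l r f g = stab l r g f := by
  simp_rw [stab_eq, mul_comm]

lemma stab_sq_le {r : ℝ} (hr : 0 ≤ r) (f g : (ι → Bool) → ℝ) :
    stab l r f g ^ 2 ≤ stab l r f f * stab l r g g := by
  simp_rw [stab_eq]
  have h := Finset.sum_mul_sq_le_sq_mul_sq (Finset.univ : Finset (Finset ι))
    (fun T => Real.sqrt (r ^ T.card) * fhat l f T) (fun T => Real.sqrt (r ^ T.card) * fhat l g T)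
  have e : ∀ T : Finset ι, Real.sqrt (r ^ T.card) * Real.sqrt (r ^ T.card) = r ^ T.card :=
    fun T => Real.mul_self_sqrt (pow_nonneg hr _)
  have e' : ∀ (F G : (ι → Bool) → ℝ) (T : Finset ι), Real.sqrt (r ^ T.card) * fhat l F T *
      (Real.sqrt (r ^ T.card) * fhat l G T) = r ^ T.card * (fhat l F T * fhat l G T) := by
    intro F G T
    linear_combination (fhat l F T * fhat l G T) * e T
  simp only [sq (Real.sqrt _ * _), e'] at h
  exact h

lemma ev_succ {n : ℕ} (F : (Fin (n + 1) → Bool) → ℝ) :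
    ev l F = l * ev l (fun s : Fin n → Bool => F (Fin.cons true s)) +
      (1 - l) * ev l (fun s : Fin n → Bool => F (Fin.cons false s)) := by
  have h : ev l F = ∑ b : Bool, ∑ s : Fin n → Bool,
      bw l b * ((∏ x, bw l (s x)) * F (Fin.cons b s)) := by
    unfold ev
    rw [← Finset.sum_product', Finset.univ_product_univ]
    refine (Fintype.sum_equiv (Fin.consEquiv fun _ => Bool) _ _ fun p => ?_).symm
    simp [Fin.consEquiv, Fin.prod_univ_succ, mul_assoc]
  rw [h]
  simp [ev, Finset.mul_sum, bw]

/-- Splitting off the first coordinate expresses `stab` through the two restrictions of `f`. -/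
lemma stab_succ (h0 : 0 < l) (h1 : l < 1) (r : ℝ) {n : ℕ} (f : (Fin (n + 1) → Bool) → ℝ) :
    stab l r f f =
      (l ^ 2 + r * (l * (1 - l))) *
        stab l r (fun s => f (Fin.cons true s)) (fun s => f (Fin.cons true s)) +
      2 * (l * (1 - l) * (1 - r)) *
        stab l r (fun s => f (Fin.cons true s)) (fun s => f (Fin.cons false s)) +
      ((1 - l) ^ 2 + r * (l * (1 - l))) *
        stab l r (fun s => f (Fin.cons false s)) (fun s => f (Fin.cons false s)) := by
  have hl1 : 1 - l ≠ 0 := by linarith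
  have key : ∀ a b : Bool, ev l (fun s : Fin n → Bool => ev l (fun u : Fin n → Bool =>
      f (Fin.cons a s) * f (Fin.cons b u) *
        ∏ x, (1 + r * (chi l ((Fin.cons a s : Fin (n+1) → Bool) x) *
          chi l ((Fin.cons b u : Fin (n+1) → Bool) x))))) =
      (1 + r * (chi l a * chi l b)) *
        stab l r (fun s => f (Fin.cons a s)) (fun s => f (Fin.cons b s)) := by
    intro a b
    unfold stab
    simp_rw [← ev_mul_left]
    congr 1; funext s; congr 1; funext u
    rw [Fin.prod_univ_succ]
    simp only [Fin.cons_zero, Fin.cons_succ]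
    ring
  have add : ∀ (a b : ℝ) (F G : (Fin n → Bool) → ℝ),
      ev l (fun s => a * F s + b * G s) = a * ev l F + b * ev l G := by
    intro a b F G
    rw [← ev_mul_left, ← ev_mul_left]
    unfold ev
    rw [← Finset.sum_add_distrib]
    exact Finset.sum_congr rfl fun s _ => by ring
  have e : stab l r f f = ev l (fun s => ev l (fun u => f s * f u *
    ∏ x, (1 + r * (chi l (s x) * chi l (u x))))) := rfl
  rw [e, ev_succ]
  simp_rw [ev_succ (l := l) (n := n), add, key]
  rw [mul_comm (chi l false) (chi l true), chi_tt h0 h1, chi_ff h0 h1, chi_tf h0 h1,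
    stab_comm r (fun s => f (Fin.cons false s)) (fun s => f (Fin.cons true s))]
  field_simp
  ring

/-- The normalised case of `two_point`, from the cubic bound
`w ^ 3 ≥ 1 + 3/2 (w ^ 2 - 1) + r (w ^ 2 - 1) ^ 2` at `w = a` and `w = b`. -/
lemma two_point_normalized {l r a b : ℝ} (h0 : 0 < l) (h1 : l < 1) (ha : 0 ≤ a) (hb : 0 ≤ b)
    (hr0 : 0 ≤ r) (hr : 4 * r ≤ l * (1 - l)) (hM : l * a ^ 2 + (1 - l) * b ^ 2 = 1) :
    1 + r * (l * (1 - l)) * (a ^ 2 - b ^ 2) ^ 2 ≤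
      (l * a ^ 3 + (1 - l) * b ^ 3) ^ (4 / 3 : ℝ) := by
  have h1' : 0 < 1 - l := by linarith
  have la : l * a ≤ 1 := by
    have : (l * a) ^ 2 ≤ 1 := by
      nlinarith [mul_nonneg h1'.le (sq_nonneg b), mul_nonneg h0.le (sq_nonneg a)]
    nlinarith [mul_nonneg h0.le ha]
  have lb : (1 - l) * b ≤ 1 := by
    have : ((1 - l) * b) ^ 2 ≤ 1 := by
      nlinarith [mul_nonneg h1'.le (sq_nonneg b), mul_nonneg h0.le (sq_nonneg a)]
    nlinarith [mul_nonneg h1'.le hb]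
  have ra : 2 * (r * (a + 1)) ≤ 1 := by nlinarith [mul_nonneg h0.le ha]
  have rb : 2 * (r * (b + 1)) ≤ 1 := by nlinarith [mul_nonneg h1'.le hb]
  have pt : ∀ w : ℝ, 0 ≤ w → 2 * (r * (w + 1)) ≤ 1 →
      1 + 3 / 2 * (w ^ 2 - 1) + r * (w ^ 2 - 1) ^ 2 ≤ w ^ 3 := by
    intro w hw hrw
    have h2 : r * (w + 1) ^ 2 ≤ w + 1 / 2 := by nlinarith
    nlinarith [mul_le_mul_of_nonneg_left h2 (sq_nonneg (w - 1))]
  have pa := mul_le_mul_of_nonneg_left (pt a ha ra) h0.le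
  have pb := mul_le_mul_of_nonneg_left (pt b hb rb) h1'.le
  have hv : l * (a ^ 2 - 1) ^ 2 + (1 - l) * (b ^ 2 - 1) ^ 2 =
      l * (1 - l) * (a ^ 2 - b ^ 2) ^ 2 := by
    linear_combination (l * a ^ 2 + (1 - l) * b ^ 2 - 1) * hM
  have h3 : 1 + r * (l * (1 - l)) * (a ^ 2 - b ^ 2) ^ 2 ≤ l * a ^ 3 + (1 - l) * b ^ 3 := by
    have e : l * (1 + 3 / 2 * (a ^ 2 - 1) + r * (a ^ 2 - 1) ^ 2) +
        (1 - l) * (1 + 3 / 2 * (b ^ 2 - 1) + r * (b ^ 2 - 1) ^ 2) =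
        1 + r * (l * (1 - l)) * (a ^ 2 - b ^ 2) ^ 2 := by
      linear_combination r * hv + 3 / 2 * hM
    linarith
  refine h3.trans ?_
  have h4 : 1 ≤ l * a ^ 3 + (1 - l) * b ^ 3 := by
    refine le_trans ?_ h3
    have : 0 ≤ r * (l * (1 - l)) * (a ^ 2 - b ^ 2) ^ 2 := by positivity
    linarith
  calc l * a ^ 3 + (1 - l) * b ^ 3 = (l * a ^ 3 + (1 - l) * b ^ 3) ^ (1 : ℝ) := by simp
    _ ≤ _ := Real.rpow_le_rpow_of_exponent_le h4 (by norm_num)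

/-- A quantitative Jensen inequality for `t ↦ t ^ (3/2)` at the two values `a ^ 2`, `b ^ 2`. -/
lemma two_point {l r a b : ℝ} (h0 : 0 < l) (h1 : l < 1) (ha : 0 ≤ a) (hb : 0 ≤ b)
    (hr0 : 0 ≤ r) (hr : 4 * r ≤ l * (1 - l)) :
    (l * a ^ 2 + (1 - l) * b ^ 2) ^ 2 + r * (l * (1 - l)) * (a ^ 2 - b ^ 2) ^ 2 ≤
      (l * a ^ 3 + (1 - l) * b ^ 3) ^ (4 / 3 : ℝ) := by
  have h1' : 0 < 1 - l := by linarith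
  have hM0 : 0 ≤ l * a ^ 2 + (1 - l) * b ^ 2 := by positivity
  rcases hM0.eq_or_lt with hM | hM
  · have ha0 : a = 0 := by
      have p1 := mul_nonneg h0.le (sq_nonneg a)
      have p2 := mul_nonneg h1'.le (sq_nonneg b)
      have : l * a ^ 2 = 0 := by linarith
      simpa [h0.ne'] using this
    have hb0 : b = 0 := by
      subst ha0
      have : (1 - l) * b ^ 2 = 0 := by linarith
      simpa [h1'.ne'] using this
    subst ha0 hb0
    norm_num
  · set c := Real.sqrt (l * a ^ 2 + (1 - l) * b ^ 2) with hc
    have hcpos : 0 < c := Real.sqrt_pos.mpr hM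
    have hc2 : c ^ 2 = l * a ^ 2 + (1 - l) * b ^ 2 := Real.sq_sqrt hM0
    have hn := two_point_normalized (a := a / c) (b := b / c) h0 h1 (by positivity)
      (by positivity) hr0 hr (by
        rw [div_pow, div_pow, hc2, ← mul_div_assoc, ← mul_div_assoc, ← add_div, div_self hM.ne'])
    have e1 : (l * a ^ 3 + (1 - l) * b ^ 3) = c ^ 3 * (l * (a / c) ^ 3 + (1 - l) * (b / c) ^ 3) := by
      field_simp
    have e2 : (c ^ 3) ^ (4 / 3 : ℝ) = c ^ 4 := by
      rw [← Real.rpow_natCast, ← Real.rpow_mul hcpos.le, ← Real.rpow_natCast]; norm_num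
    rw [e1, Real.mul_rpow (by positivity) (by positivity), e2]
    refine le_trans (le_of_eq ?_) (mul_le_mul_of_nonneg_left hn (by positivity))
    rw [← hc2]
    field_simp

/-- Induction on the dimension: the cross term is bounded by Cauchy–Schwarz, and the one-dimensional
case is `two_point`. -/
lemma sse_fin (h0 : 0 < l) (h1 : l < 1) {r : ℝ} (hr0 : 0 ≤ r) (hr : 4 * r ≤ l * (1 - l)) :
    ∀ (n : ℕ) (f : (Fin n → Bool) → ℝ), (∀ s, 0 ≤ f s) → (∀ s, f s ≤ 1) →
      stab l r f f ≤ (ev l f) ^ (4 / 3 : ℝ) := by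
  intro n
  induction n with
  | zero =>
    intro f hf0 hf1
    have e1 : stab l r f f = f default * f default := by
      simp only [stab, ev, Fintype.sum_unique, Finset.univ_eq_empty, Finset.prod_empty, one_mul,
        mul_one]
      congr 1 <;> exact congrArg f (Subsingleton.elim _ _)
    have e2 : ev l f = f default := by
      simp only [ev, Fintype.sum_unique, Finset.univ_eq_empty, Finset.prod_empty, one_mul]
      exact congrArg f (Subsingleton.elim _ _)
    rw [e1, e2]
    rcases (hf0 default).eq_or_lt with h | h
    · rw [← h]; norm_num
    · rw [← sq, ← Real.rpow_natCast]
      exact Real.rpow_le_rpow_of_exponent_ge h (hf1 _) (by norm_num)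
  | succ n ih =>
    intro f hf0 hf1
    have h1' : 0 < 1 - l := by linarith
    set f1 : (Fin n → Bool) → ℝ := fun s => f (Fin.cons true s) with hf1d
    set f0 : (Fin n → Bool) → ℝ := fun s => f (Fin.cons false s) with hf0d
    have i1 := ih f1 (fun s => hf0 _) (fun s => hf1 _)
    have i0 := ih f0 (fun s => hf0 _) (fun s => hf1 _)
    have n1 : 0 ≤ ev l f1 := ev_nonneg h0.le h1.le fun s => hf0 _
    have n0 : 0 ≤ ev l f0 := ev_nonneg h0.le h1.le fun s => hf0 _
    set a := ev l f1 ^ (1 / 3 : ℝ) with ha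
    set b := ev l f0 ^ (1 / 3 : ℝ) with hb
    have a0 : 0 ≤ a := Real.rpow_nonneg n1 _
    have b0 : 0 ≤ b := Real.rpow_nonneg n0 _
    have a3 : a ^ 3 = ev l f1 := by
      rw [ha, ← Real.rpow_natCast, ← Real.rpow_mul n1]; norm_num
    have b3 : b ^ 3 = ev l f0 := by
      rw [hb, ← Real.rpow_natCast, ← Real.rpow_mul n0]; norm_num
    have a4 : ev l f1 ^ (4 / 3 : ℝ) = a ^ 4 := by
      rw [ha, ← Real.rpow_natCast, ← Real.rpow_mul n1]; norm_num
    have b4 : ev l f0 ^ (4 / 3 : ℝ) = b ^ 4 := by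
      rw [hb, ← Real.rpow_natCast, ← Real.rpow_mul n0]; norm_num
    rw [a4] at i1
    rw [b4] at i0
    have hcs := stab_sq_le (l := l) hr0 f1 f0
    have pos : ∀ g : (Fin n → Bool) → ℝ, 0 ≤ stab l r g g := by
      intro g
      rw [stab_eq]
      exact Finset.sum_nonneg fun T _ => mul_nonneg (pow_nonneg hr0 _) (mul_self_nonneg _)
    have hx : stab l r f1 f0 ≤ a ^ 2 * b ^ 2 := by
      refine abs_le_of_sq_le_sq' ?_ (by positivity) |>.2
      refine hcs.trans ?_
      calc _ ≤ a ^ 4 * b ^ 4 := mul_le_mul i1 i0 (pos _) (by positivity)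
        _ = _ := by ring
    rw [stab_succ h0 h1, ev_succ, ← a3, ← b3]
    refine le_trans ?_ (two_point h0 h1 a0 b0 hr0 hr)
    have hrl : r ≤ 1 := by nlinarith
    have c1 : 0 ≤ l ^ 2 + r * (l * (1 - l)) := by positivity
    have c2 : 0 ≤ 2 * (l * (1 - l) * (1 - r)) := by
      have : 0 ≤ 1 - r := by linarith
      positivity
    have c3 : 0 ≤ (1 - l) ^ 2 + r * (l * (1 - l)) := by positivity
    have := mul_le_mul_of_nonneg_left i1 c1
    have := mul_le_mul_of_nonneg_left i0 c3
    have := mul_le_mul_of_nonneg_left hx c2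
    nlinarith

/-- Small-set expansion on the biased cube: noise stability of a function with values in `[0, 1]`
is at most the `4/3` power of its mean. -/
lemma sse (h0 : 0 < l) (h1 : l < 1) {r : ℝ} (hr0 : 0 ≤ r) (hr : 4 * r ≤ l * (1 - l))
    (f : (ι → Bool) → ℝ) (hf0 : ∀ s, 0 ≤ f s) (hf1 : ∀ s, f s ≤ 1) :
    ∑ T : Finset ι, r ^ T.card * fhat l f T ^ 2 ≤ (ev l f) ^ (4 / 3 : ℝ) := by
  let e : ι ≃ Fin (Fintype.card ι) := Fintype.equivFin ι
  have h := sse_fin h0 h1 hr0 hr _ (fun s => f (s ∘ e)) (fun _ => hf0 _) (fun _ => hf1 _)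
  rw [ev_equiv e f] at h
  have e1 : stab l r f f = stab l r (fun s => f (s ∘ e)) (fun s => f (s ∘ e)) := by
    unfold stab
    rw [← ev_equiv e]
    congr 1; funext s
    rw [← ev_equiv e]
    congr 1; funext u
    congr 1
    exact Equiv.prod_comp e (fun y => 1 + r * (chi l (s y) * chi l (u y)))
  rw [← e1, stab_eq] at h
  simpa only [sq] using h

end sse
end RMW

/-! ### Weight enumerators and random erasures -/

namespace RMW
section interp
variable {l : ℝ} {ι : Type} [Fintype ι] [DecidableEq ι]

lemma ev_split (x : ι) (F : (ι → Bool) → ℝ) :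
    ev l F = ev l (fun t : {y // y ≠ x} → Bool =>
      l * F ((Equiv.funSplitAt x Bool).symm (true, t)) +
        (1 - l) * F ((Equiv.funSplitAt x Bool).symm (false, t))) := by
  have h : ev l F = ∑ t : {y // y ≠ x} → Bool, ∑ b : Bool,
      bw l b * ((∏ y, bw l (t y)) * F ((Equiv.funSplitAt x Bool).symm (b, t))) := by
    unfold ev
    rw [Finset.sum_comm, ← Finset.sum_product', Finset.univ_product_univ]
    refine (Fintype.sum_equiv (Equiv.funSplitAt x Bool).symm _ _ fun p => ?_).symm
    rw [Fintype.prod_eq_mul_prod_subtype_ne _ x]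
    have e1 : (Equiv.funSplitAt x Bool).symm p x = p.1 := by simp [Equiv.funSplitAt]
    have e2 : ∀ y : {y // y ≠ x}, (Equiv.funSplitAt x Bool).symm p y = p.2 y := by
      intro y; simp [Equiv.funSplitAt, y.2]
    simp only [e1, e2, mul_assoc]
  rw [h]
  unfold ev
  refine Finset.sum_congr rfl fun t _ => ?_
  simp [bw]
  ring

lemma update_split (x : ι) (b c : Bool) (t : {y // y ≠ x} → Bool) :
    Function.update ((Equiv.funSplitAt x Bool).symm (b, t)) x c =
      (Equiv.funSplitAt x Bool).symm (c, t) := by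
  funext y
  by_cases h : y = x
  · subst h; simp [Equiv.funSplitAt]
  · simp [Equiv.funSplitAt, h]

lemma ev_resample (x : ι) (F : (ι → Bool) → ℝ) :
    ev l F = ev l (fun s => l * F (Function.update s x true) +
      (1 - l) * F (Function.update s x false)) := by
  rw [ev_split x F, ev_split x (fun s => l * F (Function.update s x true) +
      (1 - l) * F (Function.update s x false))]
  simp only [update_split]
  congr 1; funext t; ring

/-- Replacing a deterministic parameter `θ` by a random `0`/`1` parameter, one coordinate at a
time. -/
lemma interp (h0 : 0 ≤ l) (h1 : l ≤ 1) {θ : ℝ} (t0 : 0 ≤ θ) (t1 : θ ≤ 1) (G : (ι → ℝ) → ℝ)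
    (hG : ∀ t : ι → ℝ, (∀ y, 0 ≤ t y ∧ t y ≤ 1) → ∀ x, G (Function.update t x θ) ≤
      l * G (Function.update t x 1) + (1 - l) * G (Function.update t x 0)) :
    G (fun _ => θ) ≤ ev l (fun s => G (fun x => if s x then 1 else 0)) := by
  have main : ∀ U : Finset ι, G (fun _ => θ) ≤
      ev l (fun s => G (fun x => if x ∈ U then (if s x then 1 else 0) else θ)) := by
    intro U
    induction U using Finset.induction_on with
    | empty => simp [ev_const]
    | insert x U hx ih =>
      refine ih.trans ?_
      rw [ev_resample x (fun s => G (fun y => if y ∈ insert x U then _ else θ))]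
      refine ev_mono h0 h1 fun s => ?_
      have := hG (fun y => if y ∈ U then (if s y then 1 else 0) else θ) (by
        intro y
        split_ifs <;> constructor <;> linarith) x
      have e : ∀ (b : Bool) (a : ℝ), (if b then 1 else 0) = a →
          Function.update (fun y => if y ∈ U then (if s y then (1:ℝ) else 0) else θ) x a =
          fun y => if y ∈ insert x U then (if Function.update s x b y then 1 else 0) else θ := by
        intro b a hab
        funext y
        by_cases hy : y = x
        · subst hy; simp [hab]
        · simp [hy]
      rw [e true 1 (by simp), e false 0 (by simp)] at this
      refine le_trans (le_of_eq ?_) this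
      congr 1
      funext y
      by_cases hy : y = x
      · subst hy; simp [hx]
      · simp [hy]
  simpa using main univ

/-- The sign character of `ZMod 2`. -/
noncomputable def sgn (a : ZMod 2) : ℝ := if a = 1 then -1 else 1

lemma sgn_add (a b : ZMod 2) : sgn (a + b) = sgn a * sgn b := by
  have : ∀ a : ZMod 2, a = 0 ∨ a = 1 := by decide
  have h2 : (1 : ZMod 2) + 1 = 0 := by decide
  rcases this a with rfl | rfl <;> rcases this b with rfl | rfl <;> simp [sgn, h2]

open scoped Classical in
/-- The multivariate weight enumerator of a code. -/
noncomputable def wenum (D : Submodule (ZMod 2) (ι → ZMod 2)) (t : ι → ℝ) : ℝ :=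
  ∑ c ∈ univ.filter (· ∈ D), ∏ x, (if c x = 1 then t x else 1)

open scoped Classical in
lemma char_sum_nonneg (D : Submodule (ZMod 2) (ι → ZMod 2)) (χ : (ι → ZMod 2) → ℝ)
    (hm : ∀ a b, χ (a + b) = χ a * χ b) (hv : ∀ a, χ a = 1 ∨ χ a = -1) :
    0 ≤ ∑ c ∈ univ.filter (· ∈ D), χ c := by
  by_cases h : ∀ c ∈ D, χ c = 1
  · exact Finset.sum_nonneg fun c hc => by rw [h c (by simpa using hc)]; norm_num
  · push Not at h
    obtain ⟨a, haD, ha⟩ := h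
    have ha' : χ a = -1 := (hv a).resolve_left ha
    have : ∑ c ∈ univ.filter (· ∈ D), χ c = ∑ c ∈ univ.filter (· ∈ D), χ (c + a) := by
      refine Finset.sum_bij' (fun c _ => c - a) (fun c _ => c + a) ?_ ?_ ?_ ?_ ?_
      · intro c hc; simp only [mem_filter, mem_univ, true_and] at hc ⊢
        exact D.sub_mem hc haD
      · intro c hc; simp only [mem_filter, mem_univ, true_and] at hc ⊢
        exact D.add_mem hc haD
      · intro c _; simp
      · intro c _; simp
      · intro c _; simp
    simp only [hm, ha', mul_neg, mul_one, Finset.sum_neg_distrib] at this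
    linarith

open scoped Classical in
/-- The monomial weights are positive definite, so twisting by a sign keeps the sum nonnegative. -/
lemma twisted_nonneg (D : Submodule (ZMod 2) (ι → ZMod 2)) (t : ι → ℝ)
    (ht : ∀ y, 0 ≤ t y ∧ t y ≤ 1) (x : ι) :
    0 ≤ ∑ c ∈ univ.filter (· ∈ D), sgn (c x) * ∏ y, (if c y = 1 then t y else 1) := by
  have e : ∀ c : ι → ZMod 2, sgn (c x) * ∏ y, (if c y = 1 then t y else 1) =
      ∑ T ∈ (univ : Finset ι).powerset, ((∏ y ∈ T, (1 - t y) / 2) *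
        ∏ y ∈ univ \ T, (1 + t y) / 2) * (sgn (c x) * ∏ y ∈ T, sgn (c y)) := by
    intro c
    have : ∀ y, (if c y = 1 then t y else 1) = (1 - t y) / 2 * sgn (c y) + (1 + t y) / 2 := by
      intro y; unfold sgn; split_ifs <;> ring
    rw [Finset.prod_congr rfl fun y _ => this y, Finset.prod_add, Finset.mul_sum]
    refine Finset.sum_congr rfl fun T _ => ?_
    rw [Finset.prod_mul_distrib]; ring
  rw [Finset.sum_congr rfl fun c _ => e c, Finset.sum_comm]
  refine Finset.sum_nonneg fun T _ => ?_
  rw [← Finset.mul_sum]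
  refine mul_nonneg (mul_nonneg ?_ ?_) (char_sum_nonneg D _ ?_ ?_)
  · exact Finset.prod_nonneg fun y _ => by linarith [(ht y).2]
  · exact Finset.prod_nonneg fun y _ => by linarith [(ht y).1]
  · intro a b
    simp only [Pi.add_apply, sgn_add, Finset.prod_mul_distrib]; ring
  · intro a
    have hs : ∀ z, sgn z * sgn z = 1 := by intro z; unfold sgn; split_ifs <;> norm_num
    have : (sgn (a x) * ∏ y ∈ T, sgn (a y)) * (sgn (a x) * ∏ y ∈ T, sgn (a y)) = 1 := by
      rw [mul_mul_mul_comm, hs, ← Finset.prod_mul_distrib]; simp [hs]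
    exact mul_self_eq_one_iff.mp this

/-- Concavity of `x ↦ x ^ l` on `[1, 2]`, where `(1 + B / A)` lies because `B ≤ A`. The value
`2 ^ l - 1` of the parameter is what makes the bound tight at `A = B`. -/
lemma log_two_point {l A B : ℝ} (h0 : 0 ≤ l) (h1 : l ≤ 1) (hA : 1 ≤ A) (hB : 0 ≤ B)
    (hBA : B ≤ A) :
    Real.log (A + ((2:ℝ) ^ l - 1) * B) ≤ l * Real.log (A + B) + (1 - l) * Real.log A := by
  have hA0 : 0 < A := by linarith
  have h2l : (1:ℝ) ≤ 2 ^ l := Real.one_le_rpow (by norm_num) h0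
  set x := B / A with hx
  have x0 : 0 ≤ x := by positivity
  have x1 : x ≤ 1 := (div_le_one hA0).mpr hBA
  have hBx : B = A * x := by rw [hx]; field_simp
  have key : 1 + ((2:ℝ) ^ l - 1) * x ≤ (1 + x) ^ l := by
    have := (Real.concaveOn_rpow h0 h1).2 (show (1:ℝ) ∈ Set.Ici 0 by norm_num)
      (show (2:ℝ) ∈ Set.Ici 0 by norm_num) (show 0 ≤ 1 - x by linarith) x0 (by ring)
    simp only [smul_eq_mul, Real.one_rpow] at this
    calc _ = (1 - x) * 1 + x * 2 ^ l := by ring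
      _ ≤ _ := this
      _ = _ := by congr 1; ring
  have e1 : A + ((2:ℝ) ^ l - 1) * B = A * (1 + ((2:ℝ) ^ l - 1) * x) := by rw [hBx]; ring
  have e2 : A + B = A * (1 + x) := by rw [hBx]; ring
  have p1 : 0 < 1 + ((2:ℝ) ^ l - 1) * x := by
    have : 0 ≤ ((2:ℝ) ^ l - 1) * x := mul_nonneg (by linarith) x0
    linarith
  rw [e1, e2, Real.log_mul hA0.ne' p1.ne', Real.log_mul hA0.ne' (by linarith)]
  have := Real.log_le_log p1 key
  rw [Real.log_rpow (by linarith)] at this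
  linarith

/-- One coordinate of the enumerator may be randomised. As a function of that coordinate the
enumerator is `A + θ B`, and `B ≤ A` holds by `twisted_nonneg`. -/
lemma wenum_step (D : Submodule (ZMod 2) (ι → ZMod 2)) (h0 : 0 ≤ l) (h1 : l ≤ 1)
    (t : ι → ℝ) (ht : ∀ y, 0 ≤ t y ∧ t y ≤ 1) (x : ι) :
    Real.log (wenum D (Function.update t x ((2:ℝ) ^ l - 1))) ≤
      l * Real.log (wenum D (Function.update t x 1)) +
        (1 - l) * Real.log (wenum D (Function.update t x 0)) := by
  classical
  set P : (ι → ZMod 2) → ℝ := fun c => ∏ y ∈ univ.erase x, (if c y = 1 then t y else 1) with hP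
  have hP0 : ∀ c, 0 ≤ P c := fun c => Finset.prod_nonneg fun y _ => by
    split_ifs
    · exact (ht y).1
    · norm_num
  set A : ℝ := ∑ c ∈ univ.filter (· ∈ D), (if c x = 1 then 0 else P c) with hA
  set B : ℝ := ∑ c ∈ univ.filter (· ∈ D), (if c x = 1 then P c else 0) with hB
  have hprod : ∀ (τ : ℝ) (c : ι → ZMod 2),
      ∏ y, (if c y = 1 then Function.update t x τ y else 1) =
        (if c x = 1 then τ else 1) * P c := by
    intro τ c
    rw [← Finset.mul_prod_erase univ _ (Finset.mem_univ x)]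
    simp only [Function.update_self]
    congr 1
    refine Finset.prod_congr rfl fun y hy => ?_
    rw [Function.update_of_ne (Finset.ne_of_mem_erase hy)]
  have hZ : ∀ τ : ℝ, wenum D (Function.update t x τ) = A + τ * B := by
    intro τ
    unfold wenum
    rw [hA, hB, Finset.mul_sum, ← Finset.sum_add_distrib]
    refine Finset.sum_congr rfl fun c _ => ?_
    rw [hprod]; split_ifs <;> ring
  have hB0 : 0 ≤ B := Finset.sum_nonneg fun c _ => by split_ifs <;> simp [hP0]
  have hA1 : 1 ≤ A := by
    have hz : (0 : ι → ZMod 2) ∈ univ.filter (· ∈ D) := by simp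
    refine le_trans ?_ (Finset.single_le_sum (f := fun c => if c x = 1 then 0 else P c)
      (fun c _ => by split_ifs <;> simp [hP0]) hz)
    simp [hP]
  have hBA : B ≤ A := by
    have := twisted_nonneg D (Function.update t x 1) (by
      intro y
      by_cases h : y = x
      · subst h; simp
      · simp [h, ht y]) x
    have e : ∑ c ∈ univ.filter (· ∈ D), sgn (c x) *
        ∏ y, (if c y = 1 then Function.update t x 1 y else 1) = A - B := by
      rw [hA, hB, ← Finset.sum_sub_distrib]
      refine Finset.sum_congr rfl fun c _ => ?_
      rw [hprod]; unfold sgn; split_ifs <;> ring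
    linarith
  rw [hZ, hZ, hZ]
  have := log_two_point h0 h1 hA1 hB0 hBA
  simpa using this

/-- Coordinate `x` carries a nonzero entry of some codeword supported on the erased set `s`. -/
def Covered (D : Submodule (ZMod 2) (ι → ZMod 2)) (s : ι → Bool) (x : ι) : Prop :=
  ∃ c ∈ D, c x = 1 ∧ ∀ y, c y = 1 → s y = true

open scoped Classical in
/-- The weight enumerator at `2 ^ l - 1` is controlled by the codewords supported on a random
set of density `l`. -/
lemma log_wenum_le (D : Submodule (ZMod 2) (ι → ZMod 2)) (h0 : 0 ≤ l) (h1 : l ≤ 1) :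
    Real.log (wenum D (fun _ => (2:ℝ) ^ l - 1)) ≤
      Real.log 2 * ev l (fun s => ((univ.filter fun x => Covered D s x).card : ℝ)) := by
  have t0 : 0 ≤ (2:ℝ) ^ l - 1 := by
    linarith [Real.one_le_rpow (by norm_num : (1:ℝ) ≤ 2) h0]
  have t1 : (2:ℝ) ^ l - 1 ≤ 1 := by
    have := Real.rpow_le_rpow_of_exponent_le (by norm_num : (1:ℝ) ≤ 2) h1
    rw [Real.rpow_one] at this
    linarith
  refine (interp h0 h1 t0 t1 (fun t => Real.log (wenum D t))
    (fun t ht x => wenum_step D h0 h1 t ht x)).trans ?_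
  rw [← ev_mul_left]
  refine ev_mono h0 h1 fun s => ?_
  set N := univ.filter fun x => Covered D s x with hN
  have hterm : ∀ c : ι → ZMod 2, ∏ x, (if c x = 1 then (if s x then (1:ℝ) else 0) else 1) =
      if ∀ y, c y = 1 → s y = true then 1 else 0 := by
    intro c
    split_ifs with h
    · refine Finset.prod_eq_one fun x _ => ?_
      by_cases hx : c x = 1
      · simp [hx, h x hx]
      · simp [hx]
    · push Not at h
      obtain ⟨y, hy, hs⟩ := h
      exact Finset.prod_eq_zero (Finset.mem_univ y) (by simp [hy, hs])
  have hw : wenum D (fun x => if s x then 1 else 0) =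
      ((univ.filter fun c => c ∈ D ∧ ∀ y, c y = 1 → s y = true).card : ℝ) := by
    unfold wenum
    rw [Finset.sum_congr rfl fun c _ => hterm c, Finset.sum_boole, Finset.filter_filter]
  have hcard : (univ.filter fun c => c ∈ D ∧ ∀ y, c y = 1 → s y = true).card ≤ 2 ^ N.card := by
    rw [← Finset.card_powerset]
    refine Finset.card_le_card_of_injOn (fun c => univ.filter fun x => c x = 1) ?_ ?_
    · intro c hc
      simp only [coe_filter, mem_univ, true_and, Set.mem_ofPred_eq] at hc
      simp only [coe_powerset, Set.mem_preimage, Set.mem_powerset_iff, coe_subset]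
      intro x hx
      simp only [mem_filter, mem_univ, true_and, hN] at hx ⊢
      exact ⟨c, hc.1, hx, hc.2⟩
    · intro c _ c' _ h
      funext x
      have hx := Finset.ext_iff.mp h x
      simp only [mem_filter, mem_univ, true_and] at hx
      have two : ∀ a b : ZMod 2, (a = 1 ↔ b = 1) → a = b := by decide
      exact two _ _ hx
  have hpos : 0 < (univ.filter fun c => c ∈ D ∧ ∀ y, c y = 1 → s y = true).card :=
    Finset.card_pos.mpr ⟨0, by simp⟩
  rw [hw]
  calc Real.log _ ≤ Real.log ((2:ℝ) ^ N.card) :=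
        Real.log_le_log (by exact_mod_cast hpos) (by exact_mod_cast hcard)
    _ = Real.log 2 * N.card := by rw [Real.log_pow, mul_comm]

end interp
end RMW

/-! ### Reed–Muller codes -/

namespace RMW
section reedMuller

/-- The square-free monomial function attached to `I`. -/
def mono {m : ℕ} (I : Finset (Fin m)) (v : Fin m → ZMod 2) : ZMod 2 := ∏ i ∈ I, v i

/-- The dimension of `RM(m,d)`. -/
def beta (m d : ℕ) : ℕ := ∑ i ∈ range (d + 1), m.choose i

variable {m k d e : ℕ}

lemma mem_RM {f : (Fin m → ZMod 2) → ZMod 2} :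
    f ∈ ReedMuller m d ↔
      ∃ p : MvPolynomial (Fin m) (ZMod 2), p.totalDegree ≤ d ∧
        ∀ v, MvPolynomial.eval v p = f v := by
  unfold ReedMuller
  rw [Submodule.mem_map]
  constructor
  · rintro ⟨p, hp, rfl⟩
    exact ⟨p, (MvPolynomial.mem_restrictTotalDegree _ _ _).mp hp, fun v => by
      simp [MvPolynomial.coe_aeval_eq_eval]⟩
  · rintro ⟨p, hp, h⟩
    exact ⟨p, (MvPolynomial.mem_restrictTotalDegree _ _ _).mpr hp, by
      funext v; rw [← h v]; simp [MvPolynomial.coe_aeval_eq_eval]⟩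

lemma RM_mono (h : d ≤ e) {f : (Fin m → ZMod 2) → ZMod 2} (hf : f ∈ ReedMuller m d) :
    f ∈ ReedMuller m e := by
  rw [mem_RM] at *
  obtain ⟨p, hp, h'⟩ := hf
  exact ⟨p, hp.trans h, h'⟩

lemma RM_mul {f g : (Fin m → ZMod 2) → ZMod 2} (hf : f ∈ ReedMuller m d)
    (hg : g ∈ ReedMuller m e) : (fun v => f v * g v) ∈ ReedMuller m (d + e) := by
  rw [mem_RM] at *
  obtain ⟨p, hp, h⟩ := hf
  obtain ⟨q, hq, h'⟩ := hg
  exact ⟨p * q, (MvPolynomial.totalDegree_mul _ _).trans (by omega), fun v => by simp [h, h']⟩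

lemma RM_const (a : ZMod 2) : (fun _ => a) ∈ ReedMuller m d := by
  rw [mem_RM]
  exact ⟨MvPolynomial.C a, by simp, by simp⟩

lemma RM_coord (i : Fin m) : (fun v => v i) ∈ ReedMuller m 1 := by
  rw [mem_RM]
  exact ⟨MvPolynomial.X i, by simp, by simp⟩

lemma RM_prod {α : Type} (I : Finset α) (f : α → (Fin m → ZMod 2) → ZMod 2)
    (h : ∀ i ∈ I, f i ∈ ReedMuller m 1) : (fun v => ∏ i ∈ I, f i v) ∈ ReedMuller m I.card := by
  classical
  induction I using Finset.induction_on with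
  | empty => simpa using RM_const 1
  | insert i I hi ih =>
    simp only [Finset.prod_insert hi, Finset.card_insert_of_notMem hi]
    rw [add_comm]
    exact RM_mul (h i (by simp)) (ih fun j hj => h j (by simp [hj]))

lemma mono_mem (I : Finset (Fin m)) : mono I ∈ ReedMuller m I.card :=
  RM_prod I (fun i v => v i) fun i _ => RM_coord i

lemma RM_span (m d : ℕ) : ReedMuller m d =
    Submodule.span (ZMod 2) (Set.range fun I : {I : Finset (Fin m) // I.card ≤ d} => mono I.1) := by
  apply le_antisymm
  · intro f hf
    obtain ⟨p, hp, h⟩ := mem_RM.mp hf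
    have : f = ∑ s ∈ p.support, p.coeff s • mono s.support := by
      funext v
      rw [← h v, MvPolynomial.eval_eq]
      simp only [Finset.sum_apply, Pi.smul_apply, smul_eq_mul, mono]
      refine Finset.sum_congr rfl fun s _ => ?_
      congr 1
      refine Finset.prod_congr rfl fun i hi => ?_
      have : ∀ (a : ZMod 2) (n : ℕ), n ≠ 0 → a ^ n = a := by
        intro a n hn
        have : a = 0 ∨ a = 1 := by revert a; decide
        rcases this with rfl | rfl <;> simp [hn]
      exact this _ _ (Finsupp.mem_support_iff.mp hi)
    rw [this]
    refine Submodule.sum_mem _ fun s hs => Submodule.smul_mem _ _ (Submodule.subset_span ?_)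
    refine ⟨⟨s.support, ?_⟩, rfl⟩
    have h1 := MvPolynomial.le_totalDegree hs
    refine le_trans ?_ (h1.trans hp)
    rw [Finset.card_eq_sum_ones, Finsupp.sum]
    exact Finset.sum_le_sum fun i hi => Nat.one_le_iff_ne_zero.mpr (Finsupp.mem_support_iff.mp hi)
  · rw [Submodule.span_le]
    rintro _ ⟨I, rfl⟩
    exact RM_mono I.2 (mono_mem I.1)

/-- To prove a linear statement about `RM(m,d)` it suffices to check square-free monomials. -/
lemma RM_induction (L : ((Fin m → ZMod 2) → ZMod 2) →ₗ[ZMod 2] ((Fin k → ZMod 2) → ZMod 2))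
    (h : ∀ I : Finset (Fin m), I.card ≤ d → L (mono I) ∈ ReedMuller k e)
    {f : (Fin m → ZMod 2) → ZMod 2} (hf : f ∈ ReedMuller m d) : L f ∈ ReedMuller k e := by
  rw [RM_span m d] at hf
  have : Submodule.span (ZMod 2)
      (Set.range fun I : {I : Finset (Fin m) // I.card ≤ d} => mono I.1) ≤
      (ReedMuller k e).comap L := by
    rw [Submodule.span_le]
    rintro _ ⟨I, rfl⟩
    exact h I.1 I.2
  exact this hf

/-- Reed–Muller codes are stable under affine substitutions. -/
lemma RM_comp (L : (Fin k → ZMod 2) →ₗ[ZMod 2] (Fin m → ZMod 2)) (b : Fin m → ZMod 2)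
    {f : (Fin m → ZMod 2) → ZMod 2} (hf : f ∈ ReedMuller m d) :
    (fun u => f (b + L u)) ∈ ReedMuller k d := by
  refine RM_induction (k := k) (e := d)
    (LinearMap.funLeft (ZMod 2) (ZMod 2) (fun u => b + L u)) (fun I hI => ?_) hf
  refine RM_mono hI ?_
  refine RM_prod I (fun i u => (b + L u) i) fun i _ => ?_
  have : (fun u => (b + L u) i) = (fun _ => b i) +
      ∑ j, (L (Pi.single j 1) i) • (fun u : Fin k → ZMod 2 => u j) := by
    funext u
    have hu : u = ∑ j, u j • (Pi.single j (1 : ZMod 2) : Fin k → ZMod 2) := by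
      funext x; simp [Finset.sum_apply, Pi.single_apply]
    conv_lhs => rw [hu]
    simp [Finset.sum_apply, mul_comm]
  rw [this]
  exact Submodule.add_mem _ (RM_const _)
    (Submodule.sum_mem _ fun j _ => Submodule.smul_mem _ _ (RM_coord j))

/-- The derivative of `f` in direction `a`. -/
def der (a : Fin m → ZMod 2) :
    ((Fin m → ZMod 2) → ZMod 2) →ₗ[ZMod 2] ((Fin m → ZMod 2) → ZMod 2) where
  toFun f := fun y => f y + f (y + a)
  map_add' f g := by funext y; simp only [Pi.add_apply]; ring
  map_smul' c f := by funext y; simp only [Pi.smul_apply, smul_eq_mul, RingHom.id_apply]; ring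

lemma RM_shift (a : Fin m → ZMod 2) {f : (Fin m → ZMod 2) → ZMod 2} (hf : f ∈ ReedMuller m d) :
    (fun y => f (y + a)) ∈ ReedMuller m d := by
  have := RM_comp LinearMap.id a hf
  simpa [add_comm] using this

lemma der_const (a : Fin m → ZMod 2) (c : ZMod 2) : der a (fun _ => c) = 0 := by
  funext y
  change c + c = 0
  revert c; decide

lemma der_mono (a : Fin m → ZMod 2) (I : Finset (Fin m)) :
    der a (mono I) ∈ ReedMuller m (I.card - 1) := by
  induction I using Finset.induction_on with
  | empty =>
    have : (mono (∅ : Finset (Fin m))) = fun _ => 1 := by funext v; simp [mono]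
    rw [this, der_const]; exact Submodule.zero_mem _
  | insert i I hi ih =>
    have : der a (mono (insert i I)) = (fun y => y i * der a (mono I) y) +
        (fun y => a i * mono I (y + a)) := by
      funext y
      simp only [der, mono, LinearMap.coe_mk, AddHom.coe_mk, Finset.prod_insert hi, Pi.add_apply]
      ring
    rw [this, Finset.card_insert_of_notMem hi, Nat.add_sub_cancel]
    refine Submodule.add_mem _ ?_ ?_
    · rcases I.eq_empty_or_nonempty with rfl | hne
      · have h1 : (mono (∅ : Finset (Fin m))) = fun _ => 1 := by funext v; simp [mono]
        rw [h1, der_const]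
        simpa using RM_const 0
      · have := RM_mul (RM_coord i) ih
        have hc := hne.card_pos
        rwa [show 1 + (I.card - 1) = I.card by omega] at this
    · have := RM_mul (d := 0) (RM_const (a i)) (RM_shift a (mono_mem I))
      simpa using this

lemma der_mem (a : Fin m → ZMod 2) {f : (Fin m → ZMod 2) → ZMod 2}
    (hf : f ∈ ReedMuller m d) : der a f ∈ ReedMuller m (d - 1) :=
  RM_induction (der a) (fun I hI => RM_mono (by omega) (der_mono a I)) hf

lemma RM_zero {f : (Fin m → ZMod 2) → ZMod 2} (hf : f ∈ ReedMuller m 0) :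
    ∃ c, f = fun _ => c := by
  obtain ⟨p, hp, h⟩ := mem_RM.mp hf
  refine ⟨p.coeff 0, ?_⟩
  funext v
  rw [← h v, (MvPolynomial.totalDegree_eq_zero_iff_eq_C (p := p)).mp (by omega)]
  simp

lemma mono_span_top (m : ℕ) : ReedMuller m m = ⊤ := by
  rw [eq_top_iff]
  intro f _
  have : f = ∑ w, f w • (fun v : Fin m → ZMod 2 => ∏ i : Fin m, (1 + (v i + w i))) := by
    funext v
    simp only [Finset.sum_apply, Pi.smul_apply, smul_eq_mul]
    rw [Finset.sum_eq_single v]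
    · have : ∀ a : ZMod 2, 1 + (a + a) = 1 := by decide
      simp [this]
    · intro w _ hw
      obtain ⟨i, hi⟩ := Function.ne_iff.mp hw
      rw [Finset.prod_eq_zero (Finset.mem_univ i), mul_zero]
      revert hi; generalize w i = a; generalize v i = b; revert a b; decide
    · simp
  rw [this]
  refine Submodule.sum_mem _ fun w _ => Submodule.smul_mem _ _ ?_
  have := RM_prod (m := m) univ (fun i v => 1 + (v i + w i)) (fun i _ =>
    Submodule.add_mem _ (RM_const 1) (Submodule.add_mem _ (RM_coord i) (RM_const (w i))))
  simpa using this

lemma finrank_RM (m d : ℕ) : Module.finrank (ZMod 2) (ReedMuller m d) = beta m d := by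
  have hli : LinearIndependent (ZMod 2) (fun I : Finset (Fin m) => mono I) := by
    refine linearIndependent_of_top_le_span_of_card_eq_finrank ?_ (by simp)
    rw [← mono_span_top m, RM_span]
    refine Submodule.span_mono ?_
    rintro _ ⟨I, rfl⟩
    exact ⟨I.1, rfl⟩
  have h2 := hli.comp (fun I : {I : Finset (Fin m) // I.card ≤ d} => I.1) Subtype.val_injective
  rw [RM_span]
  have := finrank_span_eq_card h2
  refine this.trans ?_
  rw [Fintype.card_subtype]
  unfold beta
  have h3 : (univ.filter fun I : Finset (Fin m) => I.card ≤ d) =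
      (range (d + 1)).biUnion (fun i => Finset.powersetCard i univ) := by
    ext I; simp [Finset.mem_powersetCard, Nat.lt_succ_iff]
  rw [h3, Finset.card_biUnion]
  · simp
  · intro i _ j _ hij
    exact (Finset.pairwise_disjoint_powersetCard _) hij

lemma card_RM (m d : ℕ) : Nat.card (ReedMuller m d) = 2 ^ beta m d := by
  rw [← finrank_RM, Module.natCard_eq_pow_finrank (K := ZMod 2)]
  simp

end reedMuller
end RMW

/-! ### The recursion for the failure probability -/

namespace RMW
section recursion

/-- The nonzero vectors of `F_2^m`. -/
abbrev NZ (m : ℕ) : Type := {v : Fin m → ZMod 2 // v ≠ 0}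

/-- The origin cannot be recovered: some codeword is `1` at the origin and is otherwise supported
on `s`. -/
def Bad (m d : ℕ) (s : NZ m → Bool) : Prop :=
  ∃ c ∈ ReedMuller m d, c 0 = 1 ∧ ∀ v : NZ m, c v = 1 → s v = true

open scoped Classical in
/-- The indicator function of `Bad`. -/
noncomputable def bad (m d : ℕ) (s : NZ m → Bool) : ℝ := if Bad m d s then 1 else 0

/-- The probability of `Bad` when every nonzero vector is erased with probability `l`. -/
noncomputable def hh (m d : ℕ) (l : ℝ) : ℝ := ev l (bad m d)

variable {m k d : ℕ} {l : ℝ}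

lemma bad_nonneg (s : NZ m → Bool) : 0 ≤ bad m d s := by unfold bad; split_ifs <;> norm_num

lemma bad_le_one (s : NZ m → Bool) : bad m d s ≤ 1 := by unfold bad; split_ifs <;> norm_num

lemma bad_sq (s : NZ m → Bool) : bad m d s * bad m d s = bad m d s := by
  unfold bad; split_ifs <;> norm_num

lemma hh_nonneg (h0 : 0 ≤ l) (h1 : l ≤ 1) : 0 ≤ hh m d l := ev_nonneg h0 h1 bad_nonneg

/-- The nonzero vectors, seen from `x`. -/
def trans (x : Fin m → ZMod 2) (v : NZ m) : Fin m → ZMod 2 := x + v.1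

lemma trans_inj (x : Fin m → ZMod 2) : Function.Injective (trans x) := fun v w h => by
  apply Subtype.ext
  simpa [trans] using h

lemma trans_ne (x : Fin m → ZMod 2) (v : NZ m) : trans x v ≠ x := by
  simpa [trans] using v.2

lemma bad_trans {x : Fin m → ZMod 2} {s : (Fin m → ZMod 2) → Bool}
    (h : Covered (ReedMuller m d) s x) : bad m d (s ∘ trans x) = 1 := by
  obtain ⟨c, hc, hx, hs⟩ := h
  refine if_pos ⟨fun y => c (y + x), RM_shift x hc, by simpa using hx, fun v hv => ?_⟩
  refine hs _ ?_
  rw [trans, add_comm]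
  exact hv

open scoped Classical in
lemma ev_covered_le (h0 : 0 ≤ l) (h1 : l ≤ 1) :
    ev l (fun s => ((univ.filter fun x => Covered (ReedMuller m d) s x).card : ℝ)) ≤
      2 ^ m * hh m d l := by
  have : ∀ s : (Fin m → ZMod 2) → Bool,
      ((univ.filter fun x => Covered (ReedMuller m d) s x).card : ℝ) ≤
        ∑ x : Fin m → ZMod 2, bad m d (s ∘ trans x) := by
    intro s
    rw [Finset.card_filter]
    push_cast
    refine Finset.sum_le_sum fun x _ => ?_
    split_ifs with h
    · rw [bad_trans h]
    · exact bad_nonneg _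
  refine (ev_mono h0 h1 this).trans ?_
  rw [ev_sum_comm]
  simp only [ev_inj (trans_inj _)]
  simp [hh]

open scoped Classical in
lemma card_bad_le (S : (Fin m → ZMod 2) → Bool) :
    (univ.filter fun x => S x = false ∧ Bad m d (S ∘ trans x)).card ≤ beta m d := by
  set X := univ.filter fun x => S x = false ∧ Bad m d (S ∘ trans x) with hX
  have hmem : ∀ x : X, S x.1 = false ∧ Bad m d (S ∘ trans x.1) := fun x =>
    (Finset.mem_filter.mp x.2).2
  have hc : ∀ x : X, ∃ c ∈ ReedMuller m d, ∀ y : X, c y.1 = if y = x then 1 else 0 := by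
    intro x
    obtain ⟨c, hc, hc0, hcs⟩ := (hmem x).2
    refine ⟨fun y => c (y + x.1), RM_shift _ hc, fun y => ?_⟩
    have h2 : ∀ a : Fin m → ZMod 2, a + a = 0 := fun a => by
      funext i; simp only [Pi.add_apply, Pi.zero_apply]
      generalize a i = b; revert b; decide
    split_ifs with hyx
    · subst hyx; change c (y.1 + y.1) = 1; rw [h2]; exact hc0
    · have hne : y.1 + x.1 ≠ 0 := fun h => hyx (Subtype.ext (by
        calc y.1 = y.1 + x.1 + x.1 := by rw [add_assoc, h2, add_zero]
          _ = x.1 := by rw [h, zero_add]))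
      by_contra hcon
      have h1 : c (y.1 + x.1) = 1 := by
        change ¬ c (y.1 + x.1) = 0 at hcon
        revert hcon; generalize c (y.1 + x.1) = b; revert b; decide
      have := hcs ⟨_, hne⟩ h1
      change S (x.1 + (y.1 + x.1)) = true at this
      rw [add_comm y.1, ← add_assoc, h2, zero_add, (hmem y).1] at this
      exact absurd this (by simp)
  choose c hcm hcv using hc
  have hli : LinearIndependent (ZMod 2) (fun x : X => (⟨c x, hcm x⟩ : ReedMuller m d)) := by
    rw [Fintype.linearIndependent_iff]
    intro g hg y
    have := congrArg (fun z : ReedMuller m d => z.1 y.1) hg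
    simpa [Finset.sum_apply, hcv] using this
  have := hli.fintype_card_le_finrank
  rw [finrank_RM] at this
  simpa using this

/-- Counting dimensions bounds the probability of `Bad`. -/
lemma hh_le_rate (h0 : 0 ≤ l) (h1 : l ≤ 1) : (1 - l) * hh m d l ≤ (beta m d : ℝ) / 2 ^ m := by
  classical
  have key : ev l (fun S : (Fin m → ZMod 2) → Bool =>
      ∑ x : Fin m → ZMod 2, (if S x then 0 else bad m d (S ∘ trans x))) ≤ beta m d := by
    rw [← ev_const (l := l) (ι := Fin m → ZMod 2) (beta m d : ℝ)]
    refine ev_mono h0 h1 fun S => ?_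
    refine le_trans (le_of_eq ?_) (Nat.cast_le.mpr (card_bad_le (d := d) S))
    rw [Finset.card_filter]
    push_cast
    refine Finset.sum_congr rfl fun x _ => ?_
    unfold bad
    cases hS : S x <;> simp
  rw [ev_sum_comm] at key
  have e : ∀ x : Fin m → ZMod 2, ev l (fun S : (Fin m → ZMod 2) → Bool =>
      (if S x then 0 else bad m d (S ∘ trans x))) = (1 - l) * hh m d l := by
    intro x
    rw [ev_resample x]
    simp only [Function.update_self, if_true, mul_zero, zero_add, Bool.false_eq_true, if_false]
    have : ∀ S : (Fin m → ZMod 2) → Bool,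
        Function.update S x false ∘ trans x = S ∘ trans x := by
      intro S; funext v
      simp [Function.update_of_ne (trans_ne x v)]
    simp only [this]
    rw [ev_mul_left, ev_inj (trans_inj x)]
    rfl
  simp only [e] at key
  rw [le_div_iff₀ (by positivity), mul_comm]
  simpa using key

/-- The graph of a linear functional, as an embedding of `F_2^k` into `F_2^(k+1)`. -/
def graphMap (ψ : Module.Dual (ZMod 2) (Fin k → ZMod 2)) :
    (Fin k → ZMod 2) →ₗ[ZMod 2] (Fin (k + 1) → ZMod 2) where
  toFun v := Fin.cons (ψ v) v
  map_add' v w := by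
    funext i
    refine Fin.cases ?_ (fun i => ?_) i <;> simp
  map_smul' a v := by
    funext i
    refine Fin.cases ?_ (fun i => ?_) i <;> simp

/-- The graph embedding on nonzero vectors. -/
def graphNZ (ψ : Module.Dual (ZMod 2) (Fin k → ZMod 2)) (v : NZ k) : NZ (k + 1) :=
  ⟨graphMap ψ v.1, fun h => v.2 (by
    funext i
    have := congrFun h i.succ
    simpa [graphMap] using this)⟩

lemma graphNZ_eq {ψ φ : Module.Dual (ZMod 2) (Fin k → ZMod 2)} {v w : NZ k}
    (h : graphNZ ψ v = graphNZ φ w) : v = w := by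
  apply Subtype.ext
  funext i
  have := congrFun (congrArg Subtype.val h) i.succ
  simpa [graphNZ, graphMap] using this

lemma graphNZ_zero_eq (ψ : Module.Dual (ZMod 2) (Fin k → ZMod 2)) (v : NZ k) :
    graphNZ 0 v = graphNZ ψ v ↔ ψ v.1 = 0 := by
  constructor
  · intro h
    have := congrFun (congrArg Subtype.val h) 0
    simpa [graphNZ, graphMap] using this.symm
  · intro h
    apply Subtype.ext
    simp [graphNZ, graphMap, h]

lemma bad_graph (ψ : Module.Dual (ZMod 2) (Fin k → ZMod 2)) {s : NZ (k + 1) → Bool}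
    (h : Bad (k + 1) d s) : bad k d (s ∘ graphNZ ψ) = 1 := by
  obtain ⟨c, hc, h0, hs⟩ := h
  refine if_pos ⟨fun u => c (0 + graphMap ψ u), RM_comp _ 0 hc, by simpa using h0, fun v hv => ?_⟩
  exact hs (graphNZ ψ v) (by simpa [graphNZ] using hv)

/-- Restricting to two hyperplanes of `F_2^(k+1)` that meet in codimension two. -/
lemma hh_le_condSq (h0 : 0 ≤ l) (h1 : l ≤ 1) (ψ : Module.Dual (ZMod 2) (Fin k → ZMod 2)) :
    hh (k + 1) d l ≤ condSq l (bad k d) (univ.filter fun v : NZ k => ψ v.1 = 0) := by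
  have := ev_two_inj (l := l) (i₁ := graphNZ (0 : Module.Dual (ZMod 2) (Fin k → ZMod 2)))
    (i₂ := graphNZ ψ) (fun _ _ h => graphNZ_eq h) (fun _ _ h => graphNZ_eq h)
    (fun _ _ h => graphNZ_eq h) (bad k d)
  simp only [graphNZ_zero_eq] at this
  rw [← this]
  refine ev_mono h0 h1 fun s => ?_
  by_cases h : Bad (k + 1) d s
  · rw [bad_graph _ h, bad_graph _ h, one_mul]
    exact bad_le_one _
  · have : bad (k + 1) d s = 0 := if_neg h
    rw [this]
    exact mul_nonneg (bad_nonneg _) (bad_nonneg _)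

/-- A random linear functional kills a set `T` of nonzero vectors with probability at most
`1 / (|T| + 1)`. -/
lemma card_ann_le [Fintype (Module.Dual (ZMod 2) (Fin k → ZMod 2))]
    (T : Finset (NZ k))
    [DecidablePred fun ψ : Module.Dual (ZMod 2) (Fin k → ZMod 2) => ∀ v ∈ T, ψ v.1 = 0] :
    (univ.filter fun ψ : Module.Dual (ZMod 2) (Fin k → ZMod 2) => ∀ v ∈ T, ψ v.1 = 0).card *
      (T.card + 1) ≤ 2 ^ k := by
  classical
  set U : Submodule (ZMod 2) (Fin k → ZMod 2) :=
    Submodule.span (ZMod 2) (T.image Subtype.val : Finset (Fin k → ZMod 2)) with hU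
  have hcardU : T.card + 1 ≤ Nat.card U := by
    have h0 : (0 : Fin k → ZMod 2) ∉ T.image Subtype.val := by
      intro h
      obtain ⟨v, _, hv⟩ := Finset.mem_image.mp h
      exact v.2 hv
    have hT : (insert 0 (T.image Subtype.val)).card = T.card + 1 := by
      rw [Finset.card_insert_of_notMem h0,
        Finset.card_image_of_injective _ Subtype.val_injective]
    rw [← hT, ← Nat.card_eq_finsetCard]
    refine Nat.card_le_card_of_injective (fun x => (⟨x.1, ?_⟩ : U)) ?_
    · rcases Finset.mem_insert.mp x.2 with h | h
      · rw [h]; exact U.zero_mem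
      · exact Submodule.subset_span (by exact_mod_cast h)
    · intro x y h
      exact Subtype.ext (congrArg (fun z : U => z.1) h)
  have hann : (univ.filter fun ψ : Module.Dual (ZMod 2) (Fin k → ZMod 2) =>
      ∀ v ∈ T, ψ v.1 = 0).card = Nat.card U.dualAnnihilator := by
    rw [← Nat.card_eq_finsetCard]
    refine Nat.card_congr (Equiv.subtypeEquivRight fun ψ => ?_)
    rw [Submodule.mem_dualAnnihilator]
    simp only [mem_filter, mem_univ, true_and]
    constructor
    · intro h w hw
      have : U ≤ LinearMap.ker ψ := by
        rw [hU, Submodule.span_le]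
        intro x hx
        obtain ⟨v, hv, rfl⟩ := Finset.mem_image.mp (by exact_mod_cast hx)
        exact h v hv
      exact this hw
    · intro h v hv
      exact h v.1 (Submodule.subset_span (by
        rw [Finset.mem_coe]; exact Finset.mem_image_of_mem _ hv))
  have hfr := Subspace.finrank_add_finrank_dualAnnihilator_eq U
  rw [hann]
  calc _ ≤ Nat.card U.dualAnnihilator * Nat.card U := Nat.mul_le_mul_left _ hcardU
    _ = 2 ^ k := by
      rw [Module.natCard_eq_pow_finrank (K := ZMod 2) (V := U),
        Module.natCard_eq_pow_finrank (K := ZMod 2) (V := U.dualAnnihilator), ← pow_add,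
        add_comm, hfr]
      simp

/-- Averaging `hh_le_condSq` over the functional: the Fourier coefficient at `T` survives only when the
functional vanishes on `T`. -/
lemma hh_succ_le (h0 : 0 < l) (h1 : l < 1) :
    hh (k + 1) d l ≤ ∑ T : Finset (NZ k), fhat l (bad k d) T ^ 2 / (T.card + 1) := by
  classical
  have : Finite (Module.Dual (ZMod 2) (Fin k → ZMod 2)) := Module.finite_of_finite (ZMod 2)
  have : Fintype (Module.Dual (ZMod 2) (Fin k → ZMod 2)) := Fintype.ofFinite _
  have hcard : Fintype.card (Module.Dual (ZMod 2) (Fin k → ZMod 2)) = 2 ^ k := by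
    rw [← Nat.card_eq_fintype_card, Module.natCard_eq_pow_finrank (K := ZMod 2)]
    simp [Subspace.dual_finrank_eq]
  have hsum : ∑ ψ : Module.Dual (ZMod 2) (Fin k → ZMod 2), hh (k + 1) d l ≤
      ∑ ψ : Module.Dual (ZMod 2) (Fin k → ZMod 2), ∑ T : Finset (NZ k),
        (if ∀ v ∈ T, ψ v.1 = 0 then fhat l (bad k d) T ^ 2 else 0) := by
    refine Finset.sum_le_sum fun ψ _ => (hh_le_condSq h0.le h1.le ψ).trans (le_of_eq ?_)
    rw [condSq_eq h0 h1, ← Finset.sum_filter]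
    refine Finset.sum_congr ?_ fun _ _ => rfl
    ext T
    simp [Finset.subset_iff]
  rw [Finset.sum_comm, Finset.sum_const, Finset.card_univ, hcard, nsmul_eq_mul] at hsum
  have hpos : (0:ℝ) < 2 ^ k := by positivity
  refine le_of_mul_le_mul_left (a := (2:ℝ) ^ k) ?_ hpos
  push_cast at hsum
  refine hsum.trans ?_
  rw [Finset.mul_sum]
  refine Finset.sum_le_sum fun T _ => ?_
  rw [← Finset.sum_filter, Finset.sum_const, nsmul_eq_mul]
  have := card_ann_le T
  have h' : ((univ.filter fun ψ : Module.Dual (ZMod 2) (Fin k → ZMod 2) =>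
      ∀ v ∈ T, ψ v.1 = 0).card : ℝ) * (T.card + 1) ≤ 2 ^ k := by exact_mod_cast this
  rw [mul_div_assoc', le_div_iff₀ (by positivity)]
  nlinarith [sq_nonneg (fhat l (bad k d) T)]

lemma sum_fhat_sq (h0 : 0 < l) (h1 : l < 1) :
    ∑ T : Finset (NZ k), fhat l (bad k d) T ^ 2 = hh k d l := by
  have := condSq_eq h0 h1 (bad k d) univ
  rw [Finset.powerset_univ] at this
  rw [← this]
  unfold condSq hh
  congr 1
  funext s
  have : ∀ t, mix univ s t = s := fun t => by funext x; simp [mix]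
  simp only [this, ev_const, bad_sq]

lemma fhat_empty : fhat l (bad k d) ∅ = hh k d l := by
  simp [fhat, hh]

lemma hh_step_one (h0 : 0 < l) (h1 : l < 1) :
    hh (k + 1) d l ≤ (hh k d l + hh k d l ^ 2) / 2 := by
  refine (hh_succ_le h0 h1).trans ?_
  have hs := sum_fhat_sq (k := k) (d := d) h0 h1
  have hE := Finset.add_sum_erase univ (fun T => fhat l (bad k d) T ^ 2) (Finset.mem_univ ∅)
  rw [← Finset.add_sum_erase univ (fun T => fhat l (bad k d) T ^ 2 / ((T.card : ℝ) + 1))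
    (Finset.mem_univ ∅)]
  rw [hs] at hE
  have hle : ∑ T ∈ univ.erase ∅, fhat l (bad k d) T ^ 2 / ((T.card : ℝ) + 1) ≤
      ∑ T ∈ univ.erase ∅, fhat l (bad k d) T ^ 2 / 2 := by
    refine Finset.sum_le_sum fun T hT => ?_
    have hc : 1 ≤ T.card := Finset.card_pos.mpr
      (Finset.nonempty_iff_ne_empty.mpr (Finset.ne_of_mem_erase hT))
    have : (1:ℝ) ≤ T.card := by exact_mod_cast hc
    gcongr
    linarith
  rw [← Finset.sum_div] at hle
  rw [fhat_empty] at hE ⊢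
  simp only [Finset.card_empty, Nat.cast_zero, zero_add, div_one]
  linarith

/-- Small-set expansion makes each further step gain an arbitrarily large factor `q`. -/
lemma hh_step_two (h0 : 0 < l) (h1 : l < 1) {q : ℕ} (hq : 1 ≤ q) :
    hh (k + 1) d l ≤ hh k d l / q + (4 / (l * (1 - l))) ^ q * hh k d l ^ (4 / 3 : ℝ) := by
  refine (hh_succ_le h0 h1).trans ?_
  set r : ℝ := l * (1 - l) / 4 with hr
  have hll : 0 < l * (1 - l) := mul_pos h0 (by linarith)
  have hr0 : 0 < r := by positivity
  have hr1 : r ≤ 1 := by nlinarith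
  have hD : 4 / (l * (1 - l)) = r⁻¹ := by rw [hr, inv_div]
  have hsse := sse h0 h1 hr0.le (by rw [hr]; linarith) (bad k d) bad_nonneg bad_le_one
  have hpt : ∀ T : Finset (NZ k), fhat l (bad k d) T ^ 2 / ((T.card : ℝ) + 1) ≤
      fhat l (bad k d) T ^ 2 / q + r⁻¹ ^ q * (r ^ T.card * fhat l (bad k d) T ^ 2) := by
    intro T
    have hf := sq_nonneg (fhat l (bad k d) T)
    have hq0 : (0:ℝ) < q := by exact_mod_cast hq
    rcases le_or_gt q T.card with h | h
    · have h2 : 0 ≤ r⁻¹ ^ q * (r ^ T.card * fhat l (bad k d) T ^ 2) := by positivity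
      have h3 : fhat l (bad k d) T ^ 2 / ((T.card : ℝ) + 1) ≤ fhat l (bad k d) T ^ 2 / q := by
        have : (q:ℝ) ≤ T.card := by exact_mod_cast h
        gcongr
        linarith
      linarith
    · have h2 : 0 ≤ fhat l (bad k d) T ^ 2 / q := by positivity
      have h3 : fhat l (bad k d) T ^ 2 / ((T.card : ℝ) + 1) ≤ fhat l (bad k d) T ^ 2 :=
        div_le_self hf (by linarith [Nat.cast_nonneg (α := ℝ) T.card])
      have h4 : 1 ≤ r⁻¹ ^ q * r ^ T.card := by
        rw [inv_pow, ← div_eq_inv_mul, le_div_iff₀ (by positivity), one_mul]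
        exact pow_le_pow_of_le_one hr0.le hr1 h.le
      nlinarith
  refine (Finset.sum_le_sum fun T _ => hpt T).trans ?_
  rw [Finset.sum_add_distrib, ← Finset.sum_div, ← Finset.mul_sum, sum_fhat_sq h0 h1, hD]
  have : 0 ≤ r⁻¹ ^ q := by positivity
  have := mul_le_mul_of_nonneg_left hsse this
  unfold hh at *
  linarith

end recursion
end RMW

/-! ### Counting low-weight codewords -/

namespace RMW
section lowWeight

variable {m d j : ℕ}

/-- The iterated derivative of `c` in the directions `a`, in expanded form. -/
def G (c : (Fin m → ZMod 2) → ZMod 2) (a : Fin j → Fin m → ZMod 2) (x : Fin m → ZMod 2) : ZMod 2 :=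
  ∑ u : Fin j → ZMod 2, c (x + ∑ i, u i • a i)

lemma vec_add_self (a : Fin m → ZMod 2) : a + a = 0 := by
  funext i; simp only [Pi.add_apply, Pi.zero_apply]
  generalize a i = b; revert b; decide

lemma G_zero (c : (Fin m → ZMod 2) → ZMod 2) (a : Fin 0 → Fin m → ZMod 2) : G c a = c := by
  funext x; simp [G]

lemma G_succ (c : (Fin m → ZMod 2) → ZMod 2) (a : Fin (j + 1) → Fin m → ZMod 2) :
    G c a = der (a 0) (G c (fun i => a i.succ)) := by
  funext x
  simp only [G, der, LinearMap.coe_mk, AddHom.coe_mk]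
  rw [← (Fin.consEquiv fun _ : Fin (j + 1) => ZMod 2).sum_comp, Fintype.sum_prod_type]
  have h2 : ∀ F : ZMod 2 → ZMod 2, ∑ b, F b = F 0 + F 1 := fun F => Fin.sum_univ_two F
  rw [h2]
  simp [Fin.consEquiv, Fin.sum_univ_succ, add_assoc]

lemma G_mem {c : (Fin m → ZMod 2) → ZMod 2} (hc : c ∈ ReedMuller m d)
    (a : Fin j → Fin m → ZMod 2) : G c a ∈ ReedMuller m (d - j) := by
  induction j with
  | zero => rw [G_zero]; exact hc
  | succ j ih =>
    rw [G_succ, ← Nat.sub_sub]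
    exact der_mem _ (ih _)

lemma G_eq_zero_of_lt {c : (Fin m → ZMod 2) → ZMod 2} (hc : c ∈ ReedMuller m d) (h : d < j)
    (a : Fin j → Fin m → ZMod 2) : G c a = 0 := by
  obtain ⟨j, rfl⟩ : ∃ j', j = j' + 1 := ⟨j - 1, by omega⟩
  rw [G_succ]
  have := G_mem hc (fun i : Fin j => a i.succ)
  rw [show d - j = 0 by omega] at this
  obtain ⟨b, hb⟩ := RM_zero this
  rw [hb, der_const]

/-- The iterated derivative is invariant under the span of its directions. -/
lemma G_shift (c : (Fin m → ZMod 2) → ZMod 2) (a : Fin j → Fin m → ZMod 2)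
    (x : Fin m → ZMod 2) (u₀ : Fin j → ZMod 2) : G c a (x + ∑ i, u₀ i • a i) = G c a x := by
  unfold G
  refine Fintype.sum_equiv (Equiv.addRight u₀) _ _ fun u => ?_
  simp only [Equiv.coe_addRight, Pi.add_apply, add_smul, Finset.sum_add_distrib]
  congr 1
  abel

lemma G_dependent (c : (Fin m → ZMod 2) → ZMod 2) {a : Fin j → Fin m → ZMod 2}
    (h : ¬ LinearIndependent (ZMod 2) a) : G c a = 0 := by
  rw [Fintype.not_linearIndependent_iff] at h
  obtain ⟨u₀, h0, i, hi⟩ := h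
  funext x
  unfold G
  refine Finset.sum_involution (fun u _ => u + u₀) ?_ ?_ ?_ ?_
  · intro u _
    simp only [Pi.add_apply, add_smul, Finset.sum_add_distrib, h0, add_zero]
    generalize c _ = b; revert b; decide
  · intro u _ _ h
    exact hi (by simpa using congrFun h i)
  · intro u _; exact Finset.mem_univ _
  · intro u _
    rw [add_assoc, vec_add_self, add_zero]

/-- The iterated derivative is determined by its restriction to an `(m-j)`-dimensional space. -/
lemma G_restrict (a : Fin j → Fin m → ZMod 2) :
    ∃ M : (Fin (m - j) → ZMod 2) →ₗ[ZMod 2] (Fin m → ZMod 2),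
      ∀ c c' : (Fin m → ZMod 2) → ZMod 2,
        (∀ u, G c a (M u) = G c' a (M u)) → G c a = G c' a := by
  by_cases ha : LinearIndependent (ZMod 2) a
  · obtain ⟨W, hW⟩ := Submodule.exists_isCompl (Submodule.span (ZMod 2) (Set.range a))
    have hdim : Module.finrank (ZMod 2) W = m - j := by
      have h1 := Submodule.finrank_add_eq_of_isCompl hW
      rw [finrank_span_eq_card ha] at h1
      simp only [Fintype.card_fin, Module.finrank_fintype_fun_eq_card] at h1
      omega
    let e : (Fin (m - j) → ZMod 2) ≃ₗ[ZMod 2] W :=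
      LinearEquiv.ofFinrankEq _ _ (by rw [hdim]; simp)
    refine ⟨W.subtype ∘ₗ e.toLinearMap, fun c c' h => ?_⟩
    funext x
    have hx : x ∈ Submodule.span (ZMod 2) (Set.range a) ⊔ W := by rw [hW.sup_eq_top]; trivial
    obtain ⟨s, hs, w, hw, rfl⟩ := Submodule.mem_sup.mp hx
    obtain ⟨u₀, rfl⟩ := (Submodule.mem_span_range_iff_exists_fun _).mp hs
    rw [add_comm, G_shift, G_shift]
    have := h (e.symm ⟨w, hw⟩)
    simpa using this
  · exact ⟨0, fun c c' _ => by rw [G_dependent c ha, G_dependent c' ha]⟩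

lemma card_hit (S : Finset (Fin m → ZMod 2)) (x : Fin m → ZMod 2) {u : Fin j → ZMod 2}
    (hu : u ≠ 0) :
    (univ.filter fun a : Fin j → Fin m → ZMod 2 => x + ∑ i, u i • a i ∈ S).card * 2 ^ m =
      S.card * (2 ^ m) ^ j := by
  obtain ⟨i₀, hi₀⟩ := Function.ne_iff.mp hu
  have hu1 : u i₀ = 1 := by
    revert hi₀; simp only [Pi.zero_apply]; generalize u i₀ = b; revert b; decide
  have hshift : ∀ w : Fin m → ZMod 2,
      (univ.filter fun a : Fin j → Fin m → ZMod 2 => x + ∑ i, u i • a i ∈ S).card =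
      (univ.filter fun a : Fin j → Fin m → ZMod 2 => x + ∑ i, u i • a i + w ∈ S).card := by
    intro w
    refine (Finset.card_equiv (Equiv.addRight (Pi.single i₀ w)) fun a => ?_).symm
    simp only [mem_filter, mem_univ, true_and, Equiv.coe_addRight, Pi.add_apply, smul_add,
      Finset.sum_add_distrib]
    have : ∑ i, u i • (Pi.single i₀ w : Fin j → Fin m → ZMod 2) i = w := by
      rw [Finset.sum_eq_single i₀]
      · simp [hu1]
      · intro i _ hi; simp [hi]
      · simp
    rw [this, add_assoc]
  have hsum : ∑ _w : Fin m → ZMod 2,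
      (univ.filter fun a : Fin j → Fin m → ZMod 2 => x + ∑ i, u i • a i ∈ S).card =
      ∑ _a : Fin j → Fin m → ZMod 2, S.card := by
    rw [Finset.sum_congr rfl fun w _ => hshift w]
    simp only [Finset.card_filter]
    rw [Finset.sum_comm]
    refine Finset.sum_congr rfl fun a _ => ?_
    rw [← Finset.card_filter]
    refine Finset.card_equiv (Equiv.addLeft (x + ∑ i, u i • a i)) fun w => ?_
    simp [add_assoc]
  simp only [Finset.sum_const, Finset.card_univ, smul_eq_mul] at hsum
  rw [mul_comm]
  simpa [mul_comm] using hsum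

/-- The iterated derivative at `x` differs from `c x` only if one of the other `2 ^ j - 1` summands
is nonzero, so a union bound applies when the weight is small. -/
lemma card_wrong {c : (Fin m → ZMod 2) → ZMod 2} (hc : 2 ^ (j + 3) * hammingNorm c ≤ 2 ^ m)
    (x : Fin m → ZMod 2) :
    8 * (univ.filter fun a : Fin j → Fin m → ZMod 2 => G c a x ≠ c x).card ≤ (2 ^ m) ^ j := by
  classical
  set S : Finset (Fin m → ZMod 2) := univ.filter fun y => c y ≠ 0 with hS
  have hcS : S.card = hammingNorm c := rfl
  have hsub : (univ.filter fun a : Fin j → Fin m → ZMod 2 => G c a x ≠ c x) ⊆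
      (univ.erase (0 : Fin j → ZMod 2)).biUnion fun u =>
        univ.filter fun a : Fin j → Fin m → ZMod 2 => x + ∑ i, u i • a i ∈ S := by
    intro a ha
    simp only [mem_filter, mem_univ, true_and, mem_biUnion, mem_erase, and_true, hS] at ha ⊢
    by_contra hcon
    push Not at hcon
    apply ha
    unfold G
    rw [Finset.sum_eq_single 0]
    · simp
    · intro u _ hu; exact hcon u hu
    · simp
  have h1 := (Finset.card_le_card hsub).trans Finset.card_biUnion_le
  have h2 : (univ.filter fun a : Fin j → Fin m → ZMod 2 => G c a x ≠ c x).card * 2 ^ m ≤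
      2 ^ j * (S.card * (2 ^ m) ^ j) := by
    refine (Nat.mul_le_mul_right _ h1).trans ?_
    rw [Finset.sum_mul, Finset.sum_congr rfl fun u hu =>
      card_hit S x (Finset.ne_of_mem_erase hu), Finset.sum_const, smul_eq_mul]
    refine Nat.mul_le_mul_right _ ?_
    refine (Finset.card_le_univ _).trans ?_
    simp
  have h3 : (0:ℕ) < 2 ^ m := by positivity
  refine Nat.le_of_mul_le_mul_right (c := 2 ^ m) ?_ h3
  calc _ = 8 * ((univ.filter fun a : Fin j → Fin m → ZMod 2 => G c a x ≠ c x).card * 2 ^ m) := by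
        ring
    _ ≤ 8 * (2 ^ j * (S.card * (2 ^ m) ^ j)) := Nat.mul_le_mul_left _ h2
    _ = (2 ^ (j + 3) * hammingNorm c) * (2 ^ m) ^ j := by rw [hcS]; ring
    _ ≤ 2 ^ m * (2 ^ m) ^ j := Nat.mul_le_mul_right _ hc
    _ = _ := by ring

/-- Some `2m` iterated derivatives recover a low-weight function by majority vote. -/
lemma exists_directions {c : (Fin m → ZMod 2) → ZMod 2} (hm : 1 ≤ m)
    (hc : 2 ^ (j + 3) * hammingNorm c ≤ 2 ^ m) :
    ∃ A : Fin (2 * m) → Fin j → Fin m → ZMod 2, ∀ x,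
      (univ.filter fun s => G c (A s) x ≠ c x).card < m := by
  classical
  by_contra hcon
  push Not at hcon
  set N : ℕ := (2 ^ m) ^ j with hN
  have hNpos : 0 < N := by positivity
  set w : (Fin j → Fin m → ZMod 2) → (Fin m → ZMod 2) → ℕ :=
    fun a x => if G c a x ≠ c x then 9 else 1 with hw
  have hw1 : ∀ a x, 1 ≤ w a x := fun a x => by simp only [hw]; split_ifs <;> norm_num
  have lower : ∀ A : Fin (2 * m) → Fin j → Fin m → ZMod 2,
      9 ^ m ≤ ∑ x, ∏ s, w (A s) x := by
    intro A
    obtain ⟨x, hx⟩ := hcon A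
    refine le_trans ?_ (Finset.single_le_sum (f := fun x => ∏ s, w (A s) x)
      (fun _ _ => Nat.zero_le _) (Finset.mem_univ x))
    have : ∏ s, w (A s) x = 9 ^ (univ.filter fun s => G c (A s) x ≠ c x).card := by
      simp only [hw, Finset.prod_ite, Finset.prod_const, one_pow, mul_one]
    rw [this]
    exact Nat.pow_le_pow_right (by norm_num) hx
  have hcardA : Fintype.card (Fin (2 * m) → Fin j → Fin m → ZMod 2) = N ^ (2 * m) := by
    simp [hN]
  have L : N ^ (2 * m) * 9 ^ m ≤
      ∑ A : Fin (2 * m) → Fin j → Fin m → ZMod 2, ∑ x, ∏ s, w (A s) x := by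
    refine le_trans (le_of_eq ?_) (Finset.sum_le_sum fun A _ => lower A)
    rw [Finset.sum_const, Finset.card_univ, hcardA, smul_eq_mul]
  have hsw : ∀ x, ∑ a, w a x ≤ 2 * N := by
    intro x
    have h8 := card_wrong hc x
    have : ∑ a, w a x = N + 8 * (univ.filter fun a : Fin j → Fin m → ZMod 2 =>
        G c a x ≠ c x).card := by
      have e : ∀ a, w a x = 1 + 8 * (if G c a x ≠ c x then 1 else 0) := by
        intro a; simp only [hw]; split_ifs <;> norm_num
      rw [Finset.sum_congr rfl fun a _ => e a, Finset.sum_add_distrib, ← Finset.mul_sum,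
        ← Finset.card_filter]
      congr 1
      simp [hN]
    omega
  have U : ∑ A : Fin (2 * m) → Fin j → Fin m → ZMod 2, ∑ x, ∏ s, w (A s) x ≤
      2 ^ m * (2 * N) ^ (2 * m) := by
    rw [Finset.sum_comm]
    have e : ∀ x, ∑ A : Fin (2 * m) → Fin j → Fin m → ZMod 2, ∏ s, w (A s) x =
        (∑ a, w a x) ^ (2 * m) := by
      intro x
      rw [Fintype.sum_pow]
    rw [Finset.sum_congr rfl fun x _ => e x]
    refine (Finset.sum_le_sum fun x _ => Nat.pow_le_pow_left (hsw x) _).trans ?_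
    simp
  have h89 : (8:ℕ) ^ m < 9 ^ m := Nat.pow_lt_pow_left (by norm_num) (by omega)
  have hfin : N ^ (2 * m) * 9 ^ m ≤ N ^ (2 * m) * 8 ^ m := by
    refine (L.trans U).trans (le_of_eq ?_)
    rw [mul_pow, pow_mul 2 2 m, ← mul_assoc, ← mul_pow, mul_comm]
    norm_num
  have := Nat.le_of_mul_le_mul_left hfin (by positivity)
  omega

lemma majority {c : (Fin m → ZMod 2) → ZMod 2} {A : Fin (2 * m) → Fin j → Fin m → ZMod 2}
    (h : ∀ x, (univ.filter fun s => G c (A s) x ≠ c x).card < m) (x : Fin m → ZMod 2) :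
    c x = 1 ↔ m ≤ (univ.filter fun s => G c (A s) x = 1).card := by
  have hb := h x
  have two : ∀ b : ZMod 2, b = 0 ∨ b = 1 := by decide
  have hne : ∀ b : ZMod 2, b ≠ 0 ↔ b = 1 := by decide
  rcases two (c x) with h0 | h1
  · simp only [h0, hne] at hb
    rw [h0]
    simp only [zero_ne_one, false_iff]
    omega
  · rw [h1] at hb ⊢
    have := Finset.card_filter_add_card_filter_not (s := (univ : Finset (Fin (2 * m))))
      (fun s => G c (A s) x = 1)
    simp only [Finset.card_univ, Fintype.card_fin] at this
    simp only [true_iff]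
    simp only [ne_eq] at hb
    omega

open scoped Classical in
/-- The number of low-weight codewords. -/
lemma low_count (hm : 1 ≤ m) :
    (univ.filter fun c => c ∈ ReedMuller m d ∧ 2 ^ (j + 3) * hammingNorm c ≤ 2 ^ m).card ≤
      (2 ^ (m * j + beta (m - j) (d - j))) ^ (2 * m) := by
  set L := univ.filter fun c => c ∈ ReedMuller m d ∧ 2 ^ (j + 3) * hammingNorm c ≤ 2 ^ m with hL
  have hmem : ∀ c : L, c.1 ∈ ReedMuller m d ∧ 2 ^ (j + 3) * hammingNorm c.1 ≤ 2 ^ m :=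
    fun c => (Finset.mem_filter.mp c.2).2
  choose A hA using fun c : L => exists_directions hm (hmem c).2
  choose M hM using fun a : Fin j → Fin m → ZMod 2 => G_restrict (m := m) a
  have hmemG : ∀ (c : L) (s : Fin (2 * m)),
      (fun u => G c.1 (A c s) (0 + M (A c s) u)) ∈ ReedMuller (m - j) (d - j) :=
    fun c s => RM_comp (M (A c s)) 0 (G_mem (hmem c).1 _)
  let Φ : L → (Fin (2 * m) → (Fin j → Fin m → ZMod 2) × ReedMuller (m - j) (d - j)) :=
    fun c s => (A c s, ⟨_, hmemG c s⟩)
  have hΦ : Function.Injective Φ := by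
    intro c c' h
    have h1 : A c = A c' := by
      funext s; exact congrArg Prod.fst (congrFun h s)
    have h2 : ∀ s, G c.1 (A c s) = G c'.1 (A c s) := by
      intro s
      refine hM _ _ _ fun u => ?_
      have := congrFun (congrArg Subtype.val (congrArg Prod.snd (congrFun h s))) u
      simp only [Φ, zero_add] at this
      rw [this, h1]
    apply Subtype.ext
    funext x
    have e1 := majority (hA c) x
    have e2 := majority (hA c') x
    rw [← h1] at e2
    simp only [h2] at e1
    have := e1.trans e2.symm
    revert this
    generalize c.1 x = p; generalize c'.1 x = q
    revert p q; decide
  have := Nat.card_le_card_of_injective Φ hΦ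
  rw [Nat.card_eq_finsetCard, Nat.card_fun, Nat.card_prod, card_RM] at this
  refine this.trans (le_of_eq ?_)
  simp [pow_add, ← pow_mul]

lemma low_none (hm : 1 ≤ m) (hdj : d < j) {c : (Fin m → ZMod 2) → ZMod 2}
    (hcR : c ∈ ReedMuller m d) (hc : 2 ^ (j + 3) * hammingNorm c ≤ 2 ^ m) : c = 0 := by
  obtain ⟨A, hA⟩ := exists_directions hm hc
  funext x
  have := majority hA x
  simp only [G_eq_zero_of_lt hcR hdj, Pi.zero_apply, zero_ne_one, Finset.filter_false,
    Finset.card_empty, Nat.le_zero_eq] at this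
  have h1 : c x ≠ 1 := fun h => by have := this.mp h; omega
  rw [Pi.zero_apply]
  revert h1; generalize c x = b; revert b; decide

end lowWeight
end RMW

/-! ### Binomial estimates -/

namespace RMW
section binomial

/-- The rate of `RM(m,d)`. -/
noncomputable def rho (m d : ℕ) : ℝ := (beta m d : ℝ) / 2 ^ m

lemma rho_nonneg (m d : ℕ) : 0 ≤ rho m d := by unfold rho; positivity

lemma codeRate_RM (m d : ℕ) : codeRate (ReedMuller m d) = rho m d := by
  unfold codeRate rho
  rw [finrank_RM]
  simp

lemma centralBinom_sq (n : ℕ) : (2 * n + 1) * n.centralBinom ^ 2 ≤ 16 ^ n := by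
  induction n with
  | zero => simp
  | succ n ih =>
    have h := Nat.succ_mul_centralBinom_succ n
    have hpos : 0 < (n + 1) ^ 2 := by positivity
    refine Nat.le_of_mul_le_mul_left ?_ hpos
    calc (n + 1) ^ 2 * ((2 * (n + 1) + 1) * (n + 1).centralBinom ^ 2)
        = (2 * n + 3) * ((n + 1) * (n + 1).centralBinom) ^ 2 := by ring
      _ = (2 * n + 3) * (2 * (2 * n + 1) * n.centralBinom) ^ 2 := by rw [h]
      _ = 4 * ((2 * n + 3) * (2 * n + 1)) * ((2 * n + 1) * n.centralBinom ^ 2) := by ring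
      _ ≤ 4 * (4 * (n + 1) ^ 2) * 16 ^ n := by
          refine Nat.mul_le_mul (Nat.mul_le_mul_left _ ?_) ih
          nlinarith
      _ = (n + 1) ^ 2 * 16 ^ (n + 1) := by ring

lemma choose_sq (m i : ℕ) : (m + 1) * m.choose i ^ 2 ≤ 4 ^ m := by
  have hmid := Nat.choose_le_middle i m
  refine (Nat.mul_le_mul_left _ (Nat.pow_le_pow_left hmid 2)).trans ?_
  rcases Nat.even_or_odd' m with ⟨n, rfl | rfl⟩
  · rw [Nat.mul_div_cancel_left _ (by norm_num : 0 < 2), pow_mul]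
    exact centralBinom_sq n
  · have h1 : (2 * n + 1) / 2 = n := by omega
    rw [h1]
    have h2 : (n + 1).centralBinom = 2 * (2 * n + 1).choose n := by
      rw [Nat.centralBinom_eq_two_mul_choose, show 2 * (n + 1) = 2 * n + 1 + 1 by ring,
        Nat.choose_succ_succ, Nat.choose_symm_half]
      ring
    have h3 := centralBinom_sq (n + 1)
    rw [h2] at h3
    have h4 : (4:ℕ) ^ (2 * n + 1) * 4 = 16 ^ (n + 1) := by
      rw [← pow_succ, show 2 * n + 1 + 1 = 2 * (n + 1) by ring, pow_mul]
      norm_num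
    nlinarith [sq_nonneg ((2 * n + 1).choose n)]

lemma choose_le (m i : ℕ) : (m.choose i : ℝ) / 2 ^ m ≤ 1 / Real.sqrt (m + 1) := by
  rw [div_le_div_iff₀ (by positivity) (Real.sqrt_pos.mpr (by positivity)), one_mul]
  refine le_of_sq_le_sq ?_ (by positivity)
  rw [mul_pow, Real.sq_sqrt (by positivity), ← pow_mul, mul_comm m 2, pow_mul, mul_comm]
  have := choose_sq m i
  norm_num
  exact_mod_cast this

lemma beta_succ (m d : ℕ) : beta (m + 1) d + m.choose d = 2 * beta m d := by
  unfold beta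
  induction d with
  | zero => simp
  | succ d ih =>
    rw [Finset.sum_range_succ, Finset.sum_range_succ (n := d + 1)]
    rw [Nat.choose_succ_succ']
    omega

lemma rho_pred (m d : ℕ) : rho m d ≤ rho (m + 1) d + 1 / (2 * Real.sqrt (m + 1)) := by
  have h := beta_succ m d
  have h' : (beta (m + 1) d : ℝ) + m.choose d = 2 * beta m d := by exact_mod_cast h
  have hc := choose_le m d
  have e : rho m d = rho (m + 1) d + ((m.choose d : ℝ) / 2 ^ m) / 2 := by
    unfold rho
    rw [pow_succ]
    field_simp
    linarith
  rw [e]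
  have : 1 / (2 * Real.sqrt ((m:ℝ) + 1)) = (1 / Real.sqrt (m + 1)) / 2 := by
    rw [div_div, mul_comm]
  rw [this]
  linarith

/-- The rate varies slowly with the number of variables. -/
lemma rho_sub (m n d : ℕ) : rho m d ≤ rho (m + n) d + n / (2 * Real.sqrt (m + 1)) := by
  induction n with
  | zero => simp
  | succ n ih =>
    have h := rho_pred (m + n) d
    have h2 : 1 / (2 * Real.sqrt (((m + n : ℕ) : ℝ) + 1)) ≤ 1 / (2 * Real.sqrt ((m:ℝ) + 1)) := by
      have : 0 < Real.sqrt ((m:ℝ) + 1) := Real.sqrt_pos.mpr (by positivity)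
      gcongr
      linarith [Nat.cast_nonneg (α := ℝ) n]
    rw [show m + (n + 1) = m + n + 1 by ring]
    push_cast
    rw [add_div]
    linarith

/-- Chernoff bound for the lower tail of a symmetric binomial variable. -/
lemma rho_chernoff (m e : ℕ) {t : ℝ} (ht : 0 ≤ t) :
    rho m e ≤ Real.exp (-(t * ((m : ℝ) / 2 - e)) + m * t ^ 2 / 8) := by
  have h1 : (beta m e : ℝ) ≤ Real.exp (t * e) * (1 + Real.exp (-t)) ^ m := by
    have hb : (1 + Real.exp (-t)) ^ m =
        ∑ i ∈ range (m + 1), Real.exp (-t) ^ i * (m.choose i : ℝ) := by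
      rw [add_comm, add_pow]; simp
    have hext : ∑ i ∈ range (m + 1), Real.exp (-t) ^ i * (m.choose i : ℝ) =
        ∑ i ∈ range (m + e + 1), Real.exp (-t) ^ i * (m.choose i : ℝ) := by
      refine Finset.sum_subset (Finset.range_mono (by omega)) fun i _ hi => ?_
      rw [Finset.mem_range, not_lt] at hi
      rw [Nat.choose_eq_zero_of_lt (by omega)]; simp
    rw [hb, hext, Finset.mul_sum]
    unfold beta
    push_cast
    refine le_trans ?_ (Finset.sum_le_sum_of_subset_of_nonneg
      (Finset.range_mono (show e + 1 ≤ m + e + 1 by omega)) fun i _ _ => by positivity)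
    refine Finset.sum_le_sum fun i hi => ?_
    have hi' : (i : ℝ) ≤ e := by
      have := Finset.mem_range.mp hi
      exact_mod_cast (by omega : i ≤ e)
    rw [← mul_assoc, ← Real.exp_nat_mul, ← Real.exp_add]
    have : 1 ≤ Real.exp (t * e + i * -t) := Real.one_le_exp (by nlinarith)
    nlinarith [Nat.cast_nonneg (α := ℝ) (m.choose i)]
  have h2 : 1 + Real.exp (-t) ≤ 2 * Real.exp (-(t / 2) + t ^ 2 / 8) := by
    have hcosh := Real.cosh_le_exp_half_sq (t / 2)
    rw [Real.cosh_eq] at hcosh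
    have e1 : 1 + Real.exp (-t) = Real.exp (-(t / 2)) * (Real.exp (t / 2) + Real.exp (-(t / 2))) := by
      rw [mul_add, ← Real.exp_add, ← Real.exp_add]
      simp only [neg_add_cancel, Real.exp_zero]
      congr 2; ring
    rw [e1, Real.exp_add]
    have e2 : (t / 2) ^ 2 / 2 = t ^ 2 / 8 := by ring
    rw [e2] at hcosh
    have := Real.exp_pos (-(t / 2))
    nlinarith
  have h3 : (1 + Real.exp (-t)) ^ m ≤ 2 ^ m * Real.exp (m * (-(t / 2) + t ^ 2 / 8)) := by
    calc _ ≤ (2 * Real.exp (-(t / 2) + t ^ 2 / 8)) ^ m :=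
          pow_le_pow_left₀ (by positivity) h2 m
      _ = _ := by rw [mul_pow, ← Real.exp_nat_mul]
  unfold rho
  rw [div_le_iff₀ (by positivity)]
  calc (beta m e : ℝ) ≤ Real.exp (t * e) * (1 + Real.exp (-t)) ^ m := h1
    _ ≤ Real.exp (t * e) * (2 ^ m * Real.exp (m * (-(t / 2) + t ^ 2 / 8))) := by gcongr
    _ = (Real.exp (t * e) * Real.exp (m * (-(t / 2) + t ^ 2 / 8))) * 2 ^ m := by ring
    _ = _ := by rw [← Real.exp_add]; congr 2; ring

lemma beta_compl {m d : ℕ} (h : d < m) : beta m d + beta m (m - d - 1) = 2 ^ m := by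
  unfold beta
  rw [← Nat.sum_range_choose m, show m - d - 1 + 1 = m - d by omega,
    show m + 1 = (d + 1) + (m - d) by omega,
    Finset.sum_range_add (fun i => m.choose i) (d + 1) (m - d)]
  congr 1
  rw [← Finset.sum_range_reflect (fun i => m.choose i) (m - d)]
  refine Finset.sum_congr rfl fun i hi => ?_
  have := Finset.mem_range.mp hi
  rw [← Nat.choose_symm (by omega : m - d - 1 - i ≤ m)]
  congr 1
  omega

/-- A rate bounded away from `1` forces `d ≤ m / 2 + O(√m)`. -/
lemma degree_le {η : ℝ} (hη : 0 < η) : ∃ A : ℝ, ∀ m d : ℕ, 1 ≤ m → d ≤ m →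
    rho m d ≤ 1 - η → (d : ℝ) ≤ m / 2 + A * Real.sqrt m := by
  refine ⟨1 / 8 - Real.log η, fun m d hm hd h => ?_⟩
  have hm0 : (0:ℝ) < m := by exact_mod_cast hm
  have hs : 0 < Real.sqrt m := Real.sqrt_pos.mpr hm0
  have hlt : d < m := by
    rcases lt_or_eq_of_le hd with h' | rfl
    · exact h'
    · exfalso
      have : rho d d = 1 := by
        unfold rho beta
        rw [Nat.sum_range_choose]; simp
      linarith
  have hc := beta_compl hlt
  have hr : rho m d + rho m (m - d - 1) = 1 := by
    unfold rho
    rw [← add_div, div_eq_one_iff_eq (by positivity)]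
    exact_mod_cast hc
  have hch := rho_chernoff m (m - d - 1) (t := 1 / Real.sqrt m) (by positivity)
  have hη' : η ≤ Real.exp (-(1 / Real.sqrt m * ((m : ℝ) / 2 - (m - d - 1 : ℕ))) +
      m * (1 / Real.sqrt m) ^ 2 / 8) := by linarith
  have hlog := (Real.log_le_iff_le_exp hη).mpr hη'
  have e : (m : ℝ) * (1 / Real.sqrt m) ^ 2 / 8 = 1 / 8 := by
    rw [div_pow, Real.sq_sqrt hm0.le]; field_simp
  rw [e] at hlog
  have ecast : ((m - d - 1 : ℕ) : ℝ) = m - d - 1 := by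
    rw [Nat.cast_sub (by omega), Nat.cast_sub hd]; simp
  rw [ecast] at hlog
  have h5 : 1 / Real.sqrt m * ((m : ℝ) / 2 - (m - d - 1)) ≤ 1 / 8 - Real.log η := by linarith
  rw [one_div, inv_mul_le_iff₀ hs] at h5
  linarith

end binomial
end RMW

/-! ### Decay of the failure probability -/

namespace RMW
section decay
variable {l : ℝ} {k d : ℕ}

/-- Iterating `hh_step_one`: geometric decay once the failure probability is away from `1`. -/
lemma hh_iter_one (h0 : 0 < l) (h1 : l < 1) {ε : ℝ} (e0 : 0 ≤ ε) (e1 : ε ≤ 1)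
    (hx : hh k d l ≤ 1 - ε) (n : ℕ) : hh (k + n) d l ≤ (1 - ε / 2) ^ n * (1 - ε) := by
  induction n with
  | zero => simpa using hx
  | succ n ih =>
    have hstep := hh_step_one (k := k + n) (d := d) h0 h1
    have hnn : 0 ≤ hh (k + n) d l := hh_nonneg h0.le h1.le
    have hle : hh (k + n) d l ≤ 1 - ε := by
      refine ih.trans ?_
      have : (1 - ε / 2) ^ n ≤ 1 := pow_le_one₀ (by linarith) (by linarith)
      nlinarith
    have : hh (k + n + 1) d l ≤ (1 - ε / 2) * hh (k + n) d l := by nlinarith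
    rw [show k + (n + 1) = k + n + 1 by ring, pow_succ']
    have h2 := mul_le_mul_of_nonneg_left ih (show 0 ≤ 1 - ε / 2 by linarith)
    linarith

/-- Iterating `hh_step_two`: once the failure probability is small, each step gains `2 / q`. -/
lemma hh_iter_two (h0 : 0 < l) (h1 : l < 1) {q : ℕ} (hq : 2 ≤ q) {X : ℝ}
    (hX : (4 / (l * (1 - l))) ^ q * X ^ (1 / 3 : ℝ) ≤ 1 / q)
    (hx : hh k d l ≤ X) (n : ℕ) : hh (k + n) d l ≤ (2 / q) ^ n * hh k d l := by
  have hll : 0 < l * (1 - l) := mul_pos h0 (by linarith)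
  have hq' : (2:ℝ) ≤ q := by exact_mod_cast hq
  induction n with
  | zero => simp
  | succ n ih =>
    have hnn : 0 ≤ hh (k + n) d l := hh_nonneg h0.le h1.le
    have hk : 0 ≤ hh k d l := hh_nonneg h0.le h1.le
    have hle : hh (k + n) d l ≤ X := by
      refine (ih.trans ?_).trans hx
      have : ((2:ℝ) / q) ^ n ≤ 1 :=
        pow_le_one₀ (by positivity) ((div_le_one (by linarith)).mpr hq')
      nlinarith
    have hstep := hh_step_two (k := k + n) (d := d) h0 h1 (show 1 ≤ q by omega)
    have hpow : hh (k + n) d l ^ (4 / 3 : ℝ) ≤ hh (k + n) d l * X ^ (1 / 3 : ℝ) := by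
      rw [show (4 / 3 : ℝ) = 1 + 1 / 3 by norm_num,
        Real.rpow_add_of_nonneg hnn (by norm_num) (by norm_num), Real.rpow_one]
      exact mul_le_mul_of_nonneg_left (Real.rpow_le_rpow hnn hle (by norm_num)) hnn
    have hD : 0 ≤ (4 / (l * (1 - l))) ^ q := by positivity
    have h3 : (4 / (l * (1 - l))) ^ q * hh (k + n) d l ^ (4 / 3 : ℝ) ≤ hh (k + n) d l / q := by
      calc _ ≤ (4 / (l * (1 - l))) ^ q * (hh (k + n) d l * X ^ (1 / 3 : ℝ)) :=
            mul_le_mul_of_nonneg_left hpow hD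
        _ = hh (k + n) d l * ((4 / (l * (1 - l))) ^ q * X ^ (1 / 3 : ℝ)) := by ring
        _ ≤ hh (k + n) d l * (1 / q) := mul_le_mul_of_nonneg_left hX hnn
        _ = _ := by ring
    rw [show k + (n + 1) = k + n + 1 by ring, pow_succ']
    have h4 := mul_le_mul_of_nonneg_left ih (show (0:ℝ) ≤ 2 / q by positivity)
    calc hh (k + n + 1) d l ≤ hh (k + n) d l / q + hh (k + n) d l / q := by linarith
      _ = 2 / q * hh (k + n) d l := by ring
      _ ≤ _ := by rw [mul_assoc]; exact h4

lemma hh_explicit (h0 : 0 < l) (h1 : l < 1) {ε : ℝ} (e0 : 0 ≤ ε) (e1 : ε ≤ 1)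
    (hx : hh k d l ≤ 1 - ε) {q K : ℕ} (hq : 2 ≤ q)
    (hX : (4 / (l * (1 - l))) ^ q * ((1 - ε / 2) ^ K) ^ (1 / 3 : ℝ) ≤ 1 / q) :
    hh (k + K + K) d l ≤ (2 / q) ^ K := by
  have hP : (1 - ε / 2) ^ K ≤ 1 := pow_le_one₀ (by linarith) (by linarith)
  have hP0 : 0 ≤ (1 - ε / 2) ^ K := pow_nonneg (by linarith) _
  have ha : hh (k + K) d l ≤ (1 - ε / 2) ^ K := by
    refine (hh_iter_one h0 h1 e0 e1 hx K).trans ?_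
    nlinarith
  refine (hh_iter_two h0 h1 hq hX ha K).trans ?_
  have : (0:ℝ) ≤ (2 / q) ^ K := by positivity
  nlinarith

set_option maxHeartbeats 1000000 in
/-- Below capacity, the failure probability is `exp (-c √m log m)`. -/
lemma hh_small (h0 : 0 < l) (h1 : l < 1) {R' : ℝ} (hR0 : 0 ≤ R') (hR : R' < 1 - l) :
    ∃ c : ℝ, 0 < c ∧ ∀ᶠ m : ℕ in atTop, ∀ d, rho m d ≤ R' →
      hh m d l ≤ Real.exp (-(c * Real.sqrt m * Real.log m)) := by
  have hl : 0 < 1 - l := by linarith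
  set ε : ℝ := (1 - R' / (1 - l)) / 2 with hε
  have hRl : R' = (1 - l) * (1 - 2 * ε) := by rw [hε]; field_simp; ring
  have e0 : 0 < ε := by
    have : R' / (1 - l) < 1 := (div_lt_one hl).mpr hR
    linarith
  have e1 : ε ≤ 1 / 2 := by
    have : 0 ≤ R' / (1 - l) := by positivity
    linarith
  set δ : ℝ := ε * (1 - l) / 2 with hδ
  have δ0 : 0 < δ := by positivity
  have δ1 : δ ≤ 1 / 4 := by nlinarith
  set D : ℝ := 4 / (l * (1 - l)) with hD
  have hll : 0 < l * (1 - l) := mul_pos h0 hl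
  have hD1 : 1 ≤ D := by
    rw [hD, le_div_iff₀ hll]; nlinarith
  set κ : ℝ := -Real.log (1 - ε / 2) with hκ
  have κ0 : 0 < κ := by
    rw [hκ, neg_pos]; exact Real.log_neg (by linarith) (by linarith)
  have hlogD : 0 < Real.log (2 * D) := Real.log_pos (by linarith)
  set c0 : ℝ := κ / (3 * Real.log (2 * D)) with hc0
  have c00 : 0 < c0 := by positivity
  refine ⟨δ / 8, by positivity, ?_⟩
  have hy : Tendsto (fun m : ℕ => (m : ℝ) ^ (1 / 4 : ℝ)) atTop atTop :=
    (tendsto_rpow_atTop (by norm_num)).comp tendsto_natCast_atTop_atTop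
  filter_upwards [hy.eventually_ge_atTop (1 + 2 / δ + 8 / (c0 * δ)), eventually_ge_atTop 1]
    with m hm hm1 d hd
  set y : ℝ := (m : ℝ) ^ (1 / 4 : ℝ) with hydef
  have p1 : 0 < 2 / δ := by positivity
  have p2 : 0 < 8 / (c0 * δ) := by positivity
  have y1 : 1 ≤ y := by linarith
  have y2 : 2 ≤ δ * y := by
    have : 2 / δ ≤ y := by linarith
    rw [div_le_iff₀ δ0] at this; linarith
  have y3 : 8 ≤ c0 * δ * y := by
    have : 8 / (c0 * δ) ≤ y := by linarith
    rw [div_le_iff₀ (by positivity)] at this; linarith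
  have hm0 : (0:ℝ) < m := by exact_mod_cast hm1
  have hsq : Real.sqrt m = y ^ 2 := by
    rw [hydef, Real.sqrt_eq_rpow, ← Real.rpow_natCast, ← Real.rpow_mul hm0.le]; norm_num
  have hmy : (m : ℝ) = y ^ 4 := by
    rw [hydef, ← Real.rpow_natCast, ← Real.rpow_mul hm0.le]; norm_num
  have hlogy : Real.log y = Real.log m / 4 := by
    rw [hydef, Real.log_rpow hm0]; ring
  set K : ℕ := ⌊δ * y ^ 2⌋₊ with hK
  have K1 : (K : ℝ) ≤ δ * y ^ 2 := Nat.floor_le (by positivity)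
  have K2 : δ * y ^ 2 / 2 ≤ K := by
    have := Nat.lt_floor_add_one (δ * y ^ 2)
    rw [← hK] at this
    have a1 : 2 * 1 ≤ δ * y * y := mul_le_mul y2 y1 (by norm_num) (by linarith)
    have a2 : δ * y ^ 2 = δ * y * y := by ring
    linarith
  set q : ℕ := ⌊c0 * K⌋₊ with hq
  have q1 : (q : ℝ) ≤ c0 * K := Nat.floor_le (by positivity)
  have hcK : 4 * y ≤ c0 * K := by
    have a1 := mul_le_mul_of_nonneg_left K2 c00.le
    have a2 := mul_le_mul_of_nonneg_right y3 (show 0 ≤ y by linarith)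
    have a3 : c0 * (δ * y ^ 2 / 2) = c0 * δ * y * y / 2 := by ring
    linarith
  have q2 : 2 * y ≤ q := by
    have := Nat.lt_floor_add_one (c0 * K)
    rw [← hq] at this
    linarith
  have q3 : 2 ≤ q := by
    have : (2:ℝ) ≤ q := by linarith
    exact_mod_cast this
  have qpos : (0:ℝ) < q := by linarith
  have hyy : y ^ 2 ≤ y ^ 4 := pow_le_pow_right₀ y1 (by norm_num)
  have h2K : 2 * (K : ℝ) ≤ m / 2 := by
    have a1 : δ * y ^ 2 ≤ 1 / 4 * y ^ 2 := mul_le_mul_of_nonneg_right δ1 (by positivity)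
    rw [hmy]; linarith
  have h2Kn : K + K ≤ m := by
    have : ((K + K : ℕ) : ℝ) ≤ m := by push_cast; linarith
    exact_mod_cast this
  obtain ⟨k, hk⟩ : ∃ k, m = k + K + K := ⟨m - (K + K), by omega⟩
  have hkc : (m : ℝ) = k + 2 * K := by rw [hk]; push_cast; ring
  have hrk : rho k d ≤ R' + 2 * δ := by
    have := rho_sub k (K + K) d
    rw [← add_assoc, ← hk] at this
    have hsk : y ^ 2 / 2 ≤ Real.sqrt ((k:ℝ) + 1) := by
      apply Real.le_sqrt_of_sq_le
      have : (y ^ 2 / 2) ^ 2 = m / 4 := by rw [hmy]; ring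
      linarith
    have hb : ((K + K : ℕ) : ℝ) / (2 * Real.sqrt (k + 1)) ≤ 2 * δ := by
      have hy2 : 0 < y ^ 2 := by positivity
      rw [div_le_iff₀ (by linarith)]
      push_cast
      have a1 := mul_le_mul_of_nonneg_left hsk δ0.le
      linarith
    linarith
  have hxk : hh k d l ≤ 1 - ε := by
    have := hh_le_rate (m := k) (d := d) h0.le h1.le
    have h2 : (1 - l) * hh k d l ≤ (1 - l) * (1 - ε) := by
      refine this.trans ?_
      change rho k d ≤ _
      refine hrk.trans (le_of_eq ?_)
      rw [hRl, hδ]; ring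
    exact le_of_mul_le_mul_left h2 hl
  have hX : D ^ q * ((1 - ε / 2) ^ K) ^ (1 / 3 : ℝ) ≤ 1 / q := by
    have hb : 0 < 1 - ε / 2 := by linarith
    have e2 : ((1 - ε / 2) ^ K) ^ (1 / 3 : ℝ) = Real.exp (-(κ * K / 3)) := by
      rw [Real.rpow_def_of_pos (by positivity), Real.log_pow, hκ]
      congr 1; ring
    have e3 : (2 * D) ^ q = Real.exp (q * Real.log (2 * D)) := by
      rw [Real.exp_nat_mul, Real.exp_log (by linarith)]
    have h4 : (q:ℝ) * Real.log (2 * D) ≤ κ * K / 3 := by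
      calc (q:ℝ) * Real.log (2 * D) ≤ c0 * K * Real.log (2 * D) := by gcongr
        _ = κ * K / 3 := by rw [hc0]; field_simp
    rw [le_div_iff₀ qpos, e2]
    have hq2 : (q : ℝ) ≤ 2 ^ q := by exact_mod_cast (Nat.lt_two_pow_self (n := q)).le
    calc D ^ q * Real.exp (-(κ * K / 3)) * q ≤ D ^ q * Real.exp (-(κ * K / 3)) * 2 ^ q := by
          gcongr
      _ = (2 * D) ^ q * Real.exp (-(κ * K / 3)) := by rw [mul_pow]; ring
      _ = Real.exp (q * Real.log (2 * D) + -(κ * K / 3)) := by rw [e3, Real.exp_add]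
      _ ≤ 1 := by
        rw [Real.exp_le_one_iff]; linarith
  have hfin := hh_explicit h0 h1 e0.le (by linarith) hxk q3 hX
  rw [← hk] at hfin
  refine hfin.trans ?_
  have e5 : ((2:ℝ) / q) ^ K ≤ (1 / y) ^ K := by
    refine pow_le_pow_left₀ (by positivity) ?_ _
    rw [div_le_div_iff₀ qpos (by linarith)]; linarith
  refine e5.trans ?_
  have e6 : (1 / y) ^ K = Real.exp (-(K * Real.log y)) := by
    rw [one_div, inv_pow, Real.exp_neg, Real.exp_nat_mul, Real.exp_log (by linarith)]
  rw [e6, Real.exp_le_exp, neg_le_neg_iff, hsq, hlogy]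
  have hlm : 0 ≤ Real.log m := Real.log_nonneg (by exact_mod_cast hm1)
  have a1 := mul_le_mul_of_nonneg_right K2 (show 0 ≤ Real.log m / 4 by linarith)
  linarith

end decay
end RMW

/-! ### Large and small weights combined -/

namespace RMW
section assembly

/-- The numerical inequality behind the exponent `2 ln 2`. -/
lemma rpow_lt_two_rpow_sub_one {x : ℝ} (x0 : 0 < x) (x1 : x < 1) :
    x ^ (2 * Real.log 2) < 2 ^ x - 1 := by
  have hpos : ∀ y : ℝ, 0 < y → 0 < (2:ℝ) ^ y - 1 := fun y hy => by
    linarith [Real.one_lt_rpow (by norm_num : (1:ℝ) < 2) hy]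
  have hL : 0 < Real.log 2 := Real.log_pos (by norm_num)
  set F : ℝ → ℝ := fun y => Real.log ((2:ℝ) ^ y - 1) - 2 * Real.log 2 * Real.log y with hF
  have hder : ∀ y : ℝ, 0 < y → HasDerivAt F
      ((2:ℝ) ^ y * Real.log 2 / ((2:ℝ) ^ y - 1) - 2 * Real.log 2 * y⁻¹) y := by
    intro y hy
    have h1 : HasDerivAt (fun y : ℝ => (2:ℝ) ^ y - 1) ((2:ℝ) ^ y * Real.log 2) y :=
      (Real.hasStrictDerivAt_const_rpow (by norm_num) y).hasDerivAt.sub_const 1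
    exact (h1.log (hpos y hy).ne').sub ((Real.hasDerivAt_log hy.ne').const_mul _)
  have hanti : StrictAntiOn F (Set.Icc x 1) := by
    refine strictAntiOn_of_deriv_neg (convex_Icc x 1) ?_ ?_
    · intro y hy
      exact (hder y (by linarith [hy.1])).continuousAt.continuousWithinAt
    · intro y hy
      rw [interior_Icc] at hy
      have y0 : 0 < y := by linarith [hy.1]
      rw [(hder y y0).deriv]
      have hb : (2:ℝ) ^ (1 - y) < 2 - y := by
        have := rpow_one_add_lt_one_add_mul_self (s := 1) (by norm_num) (by norm_num)
          (p := 1 - y) (by linarith [hy.2]) (by linarith)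
        norm_num at this
        linarith
      have hP := hpos y y0
      have hmul : (2:ℝ) ^ (1 - y) * 2 ^ y = 2 := by
        rw [← Real.rpow_add (by norm_num)]; simp
      have h2y : (0:ℝ) < 2 ^ y := by positivity
      have hlt : 2 < (2 - y) * (2:ℝ) ^ y := by
        have := mul_lt_mul_of_pos_right hb h2y
        linarith
      have e : (2:ℝ) ^ y * Real.log 2 / ((2:ℝ) ^ y - 1) - 2 * Real.log 2 * y⁻¹ =
          -(Real.log 2 * ((2 - y) * 2 ^ y - 2) / (((2:ℝ) ^ y - 1) * y)) := by
        field_simp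
        ring
      rw [e, neg_lt_zero]
      have : 0 < (2 - y) * (2:ℝ) ^ y - 2 := by linarith
      positivity
  have h := hanti (Set.left_mem_Icc.mpr x1.le) (Set.right_mem_Icc.mpr x1.le) x1
  have hF1 : F 1 = 0 := by simp [hF]; norm_num
  rw [hF1] at h
  rw [Real.rpow_def_of_pos x0, ← Real.lt_log_iff_exp_lt (hpos x x0)]
  simp only [hF] at h
  linarith

variable {m d i j : ℕ} {l : ℝ}

lemma weightEnum_eq (C : Submodule (ZMod 2) ((Fin m → ZMod 2) → ZMod 2)) (i : ℕ)
    [DecidablePred fun c => c ∈ C ∧ hammingNorm c = i] :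
    weightEnum C i = (univ.filter fun c => c ∈ C ∧ hammingNorm c = i).card := by
  unfold weightEnum
  rw [Nat.card_eq_fintype_card, Fintype.card_subtype]

lemma weightEnum_mul_le (C : Submodule (ZMod 2) ((Fin m → ZMod 2) → ZMod 2)) (i : ℕ) {t : ℝ}
    (ht : 0 ≤ t) : (weightEnum C i : ℝ) * t ^ i ≤ wenum C (fun _ => t) := by
  classical
  rw [weightEnum_eq]
  unfold wenum
  have e : ∀ c : (Fin m → ZMod 2) → ZMod 2,
      ∏ x, (if c x = 1 then t else 1) = t ^ hammingNorm c := by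
    intro c
    have hne : ∀ b : ZMod 2, b ≠ 0 ↔ b = 1 := by decide
    rw [Finset.prod_ite, Finset.prod_const, Finset.prod_const_one, mul_one]
    unfold hammingNorm
    simp only [hne]
  rw [Finset.sum_congr rfl fun c _ => e c]
  calc ((univ.filter fun c => c ∈ C ∧ hammingNorm c = i).card : ℝ) * t ^ i
      = ∑ c ∈ univ.filter (fun c => c ∈ C ∧ hammingNorm c = i), t ^ hammingNorm c := by
        rw [Finset.sum_congr rfl fun c hc => by rw [(Finset.mem_filter.mp hc).2.2]]
        simp
    _ ≤ _ := by
        refine Finset.sum_le_sum_of_subset_of_nonneg ?_ fun _ _ _ => by positivity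
        intro c hc
        simp only [mem_filter, mem_univ, true_and] at hc ⊢
        exact hc.1

lemma weightEnum_zero_le (C : Submodule (ZMod 2) ((Fin m → ZMod 2) → ZMod 2)) :
    weightEnum C 0 ≤ 1 := by
  classical
  rw [weightEnum_eq, Finset.card_le_one]
  intro a ha b hb
  simp only [mem_filter, mem_univ, true_and, hammingNorm_eq_zero] at ha hb
  rw [ha.2, hb.2]

lemma weightEnum_low (hm : 1 ≤ m) (hi : 2 ^ (j + 3) * i ≤ 2 ^ m) :
    weightEnum (ReedMuller m d) i ≤ (2 ^ (m * j + beta (m - j) (d - j))) ^ (2 * m) := by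
  classical
  refine le_trans ?_ (low_count hm)
  rw [weightEnum_eq]
  refine Finset.card_le_card fun c hc => ?_
  simp only [mem_filter, mem_univ, true_and] at hc ⊢
  exact ⟨hc.1, by rw [hc.2]; exact hi⟩

lemma weightEnum_none (hm : 1 ≤ m) (hi : 2 ^ (j + 3) * i ≤ 2 ^ m) (hi1 : 1 ≤ i) (hd : d < j) :
    weightEnum (ReedMuller m d) i = 0 := by
  classical
  rw [weightEnum_eq, Finset.card_eq_zero, Finset.filter_eq_empty_iff]
  rintro c - ⟨hc, hw⟩
  have := low_none hm hd hc (by rw [hw]; exact hi)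
  rw [this, hammingNorm_zero] at hw
  omega

/-- Codewords of large weight: the weight enumerator at `2 ^ l - 1` is already small enough. -/
lemma large_weight (h0 : 0 < l) (h1 : l < 1) {θ : ℝ} (hθ : 0 < θ)
    (hi : Real.log 2 * (2 ^ m * hh m d l) ≤ i * Real.log (((2:ℝ) ^ l - 1) / θ)) :
    (weightEnum (ReedMuller m d) i : ℝ) * θ ^ i ≤ 1 := by
  set t : ℝ := (2:ℝ) ^ l - 1 with ht
  have t0 : 0 < t := by
    have := Real.one_lt_rpow (by norm_num : (1:ℝ) < 2) h0
    linarith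
  classical
  have hw := log_wenum_le (ReedMuller m d) h0.le h1.le
  have hc := ev_covered_le (m := m) (d := d) h0.le h1.le
  have hL : 0 < Real.log 2 := Real.log_pos (by norm_num)
  have h2 : Real.log (wenum (ReedMuller m d) fun _ => t) ≤ i * Real.log (t / θ) :=
    (hw.trans (mul_le_mul_of_nonneg_left hc hL.le)).trans hi
  have h3 : (wenum (ReedMuller m d) fun _ => t) ≤ (t / θ) ^ i := by
    have hz : 0 ≤ wenum (ReedMuller m d) fun _ => t :=
      Finset.sum_nonneg fun c _ => Finset.prod_nonneg fun x _ => by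
        split_ifs <;> linarith
    rcases hz.eq_or_lt with h | h
    · rw [← h]; positivity
    · rw [← Real.log_le_log_iff h (by positivity), Real.log_pow]
      exact h2
  have h4 := (weightEnum_mul_le (ReedMuller m d) i t0.le).trans h3
  rw [div_pow, le_div_iff₀ (by positivity)] at h4
  have h5 : 0 < t ^ i := by positivity
  refine le_of_mul_le_mul_right ?_ h5
  linarith

set_option maxHeartbeats 1000000 in
/-- Codewords of small weight: the count of low-weight codewords suffices. -/
lemma small_weight {c σ θ R' : ℝ} (hc : 0 < c) (hσ : 0 < σ) (hθ : 0 < θ) (hθ1 : θ < 1)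
    (hR' : R' < 1) : ∀ᶠ m : ℕ in atTop, ∀ d i : ℕ, d ≤ m → rho m d ≤ R' → 1 ≤ i →
      i * σ < 2 ^ m * Real.exp (-(c * Real.sqrt m * Real.log m)) →
      (weightEnum (ReedMuller m d) i : ℝ) * θ ^ i ≤ 1 := by
  obtain ⟨A, hA⟩ := degree_le (show 0 < 1 - R' by linarith)
  set τ : ℝ := -Real.log θ with hτ
  have τ0 : 0 < τ := by rw [hτ, neg_pos]; exact Real.log_neg hθ hθ1
  set s : ℝ := 8 / c with hs
  have s0 : 0 < s := by positivity
  set B : ℝ := Real.exp (s * A + s ^ 2 / 8) with hB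
  have hsqrt : Tendsto (fun m : ℕ => Real.sqrt m) atTop atTop :=
    Real.tendsto_sqrt_atTop.comp tendsto_natCast_atTop_atTop
  have hlog : Tendsto (fun m : ℕ => Real.log m) atTop atTop :=
    Real.tendsto_log_atTop.comp tendsto_natCast_atTop_atTop
  have hr : Tendsto (fun m : ℕ => (m : ℝ) ^ 3 * ((2:ℝ) ^ (-(1 / 4) : ℝ)) ^ m) atTop (nhds 0) := by
    refine tendsto_pow_const_mul_const_pow_of_abs_lt_one 3 ?_
    rw [abs_of_pos (by positivity)]
    exact Real.rpow_lt_one_of_one_lt_of_neg (by norm_num) (by norm_num)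
  filter_upwards [eventually_ge_atTop 1, hsqrt.eventually_ge_atTop (4 * A),
    hsqrt.eventually_ge_atTop 1,
    hlog.eventually_ge_atTop ((|4 - Real.log σ|) * (2 / c)),
    tendsto_natCast_atTop_atTop.eventually_ge_atTop (64 * B / τ),
    hr.eventually_lt_const (show 0 < τ / 64 by positivity)]
    with m hm1 hmA hms hml hmB hmr d i hd hrho hi1 hi
  have hm0 : (0:ℝ) < m := by exact_mod_cast hm1
  have hi0 : (0:ℝ) < i := by exact_mod_cast hi1
  set T : ℝ := Real.sqrt m * Real.log m with hT
  have hlogm : 0 ≤ Real.log m := Real.log_nonneg (by exact_mod_cast hm1)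
  have hcT : |4 - Real.log σ| ≤ c * T / 2 := by
    have h1 : |4 - Real.log σ| ≤ c / 2 * Real.log m := by
      have h2 := mul_le_mul_of_nonneg_left hml (show 0 ≤ c / 2 by positivity)
      have e : c / 2 * (|4 - Real.log σ| * (2 / c)) = |4 - Real.log σ| := by field_simp
      linarith
    have h3 : Real.log m ≤ T := by rw [hT]; nlinarith
    have h4 := mul_le_mul_of_nonneg_left h3 (show 0 ≤ c / 2 by positivity)
    linarith
  have hcT' : 4 - Real.log σ ≤ c * T / 2 := (le_abs_self _).trans hcT
  have hcT0 : 0 ≤ c * T / 2 := (abs_nonneg _).trans hcT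
  have hi2m : i ≤ 2 ^ m := by
    by_contra hcon
    push Not at hcon
    have h1 : (2:ℝ) ^ m < i := by exact_mod_cast hcon
    -- here `i * σ` would exceed `2 ^ m * exp (-c T)`, because `exp (c T) * σ ≥ 1`
    have h2 : Real.exp (-(c * Real.sqrt m * Real.log m)) ≤ σ := by
      rw [← Real.le_log_iff_exp_le hσ, mul_assoc, ← hT]
      linarith
    nlinarith [Real.exp_pos (-(c * Real.sqrt m * Real.log m))]
  set ℓ : ℕ := Nat.log 2 (2 ^ m / i) with hℓ
  have hdiv : 2 ^ m / i ≠ 0 := (Nat.div_pos hi2m hi1).ne'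
  have hℓ1 : 2 ^ ℓ * i ≤ 2 ^ m := by
    have := Nat.pow_log_le_self 2 hdiv
    exact (Nat.le_div_iff_mul_le hi1).mp this
  have hℓ2 : 2 ^ m < 2 ^ (ℓ + 1) * i := by
    have := Nat.lt_pow_succ_log_self (b := 2) (by norm_num) (2 ^ m / i)
    exact (Nat.div_lt_iff_lt_mul hi1).mp this
  have hℓ2r : (2:ℝ) ^ m < 2 ^ (ℓ + 1) * i := by exact_mod_cast hℓ2
  have hℓ3 : Real.log σ + c * T < ℓ + 1 := by
    have h1 : i * σ < i * (2 ^ (ℓ + 1) * Real.exp (-(c * T))) := by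
      have e : c * Real.sqrt m * Real.log m = c * T := by rw [hT]; ring
      rw [e] at hi
      nlinarith [Real.exp_pos (-(c * T))]
    have h2 := lt_of_mul_lt_mul_left h1 hi0.le
    have h3 := Real.log_lt_log hσ h2
    rw [Real.log_mul (by positivity) (Real.exp_pos _).ne', Real.log_exp, Real.log_pow] at h3
    have h4 : Real.log 2 ≤ 1 := by linarith [Real.log_two_lt_d9]
    have h5 : ((ℓ + 1 : ℕ) : ℝ) * Real.log 2 ≤ (ℓ + 1 : ℕ) :=
      mul_le_of_le_one_right (by positivity) h4
    push_cast at h3 h5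
    linarith
  have hℓ4 : 3 ≤ ℓ := by
    have : (3:ℝ) < ℓ := by linarith
    exact_mod_cast this.le
  obtain ⟨j, hj⟩ : ∃ j, ℓ = j + 3 := ⟨ℓ - 3, by omega⟩
  rw [hj] at hℓ1 hℓ2 hℓ2r hℓ3
  have hjT : c * T / 2 ≤ j := by push_cast at hℓ3; linarith
  rcases lt_or_ge d j with hdj | hjd
  · rw [weightEnum_none hm1 hℓ1 hi1 hdj]; simp
  have hjm : j ≤ m := hjd.trans hd
  have hlow := weightEnum_low (d := d) hm1 hℓ1
  -- the weight `i` dominates `2 ^ (m - j)`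
  have hbig : (2:ℝ) ^ (m - j) < 16 * i := by
    have e : (2:ℝ) ^ m = 2 ^ (m - j) * 2 ^ j := by rw [← pow_add]; congr 1; omega
    rw [e, show j + 3 + 1 = j + 4 by ring, pow_add (2:ℝ) j 4] at hℓ2r
    have h2 : (0:ℝ) < 2 ^ j := by positivity
    refine lt_of_mul_lt_mul_right ?_ h2.le
    linarith
  have hdm := hA m d hm1 hd (by linarith)
  have hs0 : 0 < Real.sqrt m := by linarith
  have hss : Real.sqrt m * Real.sqrt m = m := Real.mul_self_sqrt hm0.le
  -- the rate of the residual code is `O(m⁻²)`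
  have hrho2 : 64 * m * rho (m - j) (d - j) ≤ τ := by
    have hch := rho_chernoff (m - j) (d - j) (t := s / Real.sqrt m) (by positivity)
    have e1 : -(s / Real.sqrt m * (((m - j : ℕ) : ℝ) / 2 - (d - j : ℕ))) +
        ((m - j : ℕ) : ℝ) * (s / Real.sqrt m) ^ 2 / 8 ≤
        -(2 * Real.log m) + (s * A + s ^ 2 / 8) := by
      rw [Nat.cast_sub hjm, Nat.cast_sub hjd]
      have hΔ : c * T / 4 - A * Real.sqrt m ≤ ((m:ℝ) - j) / 2 - (d - j) := by linarith
      have h1 := mul_le_mul_of_nonneg_left hΔ (show 0 ≤ s / Real.sqrt m by positivity)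
      have h2 : s / Real.sqrt m * (c * T / 4 - A * Real.sqrt m) = 2 * Real.log m - s * A := by
        rw [hT, hs]; field_simp; ring
      have h3 : ((m:ℝ) - j) * (s / Real.sqrt m) ^ 2 / 8 ≤ s ^ 2 / 8 := by
        rw [div_pow, Real.sq_sqrt hm0.le, mul_div_assoc', div_div,
          div_le_div_iff₀ (by positivity) (by norm_num)]
        have : 0 ≤ (j:ℝ) * s ^ 2 := by positivity
        nlinarith
      linarith
    have h4 := hch.trans (Real.exp_le_exp.mpr e1)
    rw [Real.exp_add, ← hB, Real.exp_neg, mul_comm 2, Real.exp_mul, Real.exp_log hm0,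
      Real.rpow_two] at h4
    have h5 : 64 * B ≤ m * τ := (div_le_iff₀ τ0).mp hmB
    calc 64 * m * rho (m - j) (d - j) ≤ 64 * m * (((m:ℝ) ^ 2)⁻¹ * B) := by gcongr
      _ = 64 * B / m := by field_simp
      _ ≤ τ := by rw [div_le_iff₀ hm0]; linarith
  have hbeta : 4 * m * (beta (m - j) (d - j) : ℝ) ≤ τ * i := by
    have e : (beta (m - j) (d - j) : ℝ) = rho (m - j) (d - j) * 2 ^ (m - j) := by
      unfold rho; field_simp
    rw [e]
    have h1 := mul_le_mul_of_nonneg_right hrho2 (show (0:ℝ) ≤ 2 ^ (m - j) by positivity)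
    have h2 := mul_le_mul_of_nonneg_left hbig.le τ0.le
    linarith
  have hmj : 4 * (m:ℝ) * (m * j) ≤ τ * i := by
    have hd34 : (d:ℝ) ≤ 3 / 4 * m := by nlinarith
    have h1 : (2:ℝ) ^ ((m:ℝ) / 4) ≤ 2 ^ (m - j) := by
      rw [← Real.rpow_natCast 2 (m - j), Nat.cast_sub hjm]
      refine Real.rpow_le_rpow_of_exponent_le (by norm_num) ?_
      have : (j:ℝ) ≤ d := by exact_mod_cast hjd
      linarith
    have e : ((2:ℝ) ^ (-(1 / 4) : ℝ)) ^ m = ((2:ℝ) ^ ((m:ℝ) / 4))⁻¹ := by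
      rw [← Real.rpow_natCast, ← Real.rpow_mul (by norm_num), ← Real.rpow_neg (by norm_num)]
      congr 1; ring
    rw [e, ← div_eq_mul_inv, div_lt_iff₀ (by positivity)] at hmr
    have h3 : (j:ℝ) ≤ m := by exact_mod_cast hjm
    have h4 : 4 * (m:ℝ) * (m * j) ≤ 4 * (m:ℝ) ^ 3 := by
      calc 4 * (m:ℝ) * (m * j) ≤ 4 * (m:ℝ) * (m * m) := by gcongr
        _ = _ := by ring
    have h5 := mul_le_mul_of_nonneg_left (h1.trans hbig.le) (show 0 ≤ τ / 64 by positivity)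
    linarith
  have hexp : ((2 * m * (m * j + beta (m - j) (d - j)) : ℕ) : ℝ) * Real.log 2 ≤ τ * i := by
    have h4 : Real.log 2 ≤ 1 := by linarith [Real.log_two_lt_d9]
    refine (mul_le_of_le_one_right (by positivity) h4).trans ?_
    push_cast
    linarith
  have hle : (weightEnum (ReedMuller m d) i : ℝ) ≤ Real.exp (τ * i) := by
    calc (weightEnum (ReedMuller m d) i : ℝ)
        ≤ (2:ℝ) ^ (2 * m * (m * j + beta (m - j) (d - j))) := by
          rw [mul_comm (2 * m), pow_mul]
          exact_mod_cast hlow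
      _ = Real.exp (((2 * m * (m * j + beta (m - j) (d - j)) : ℕ) : ℝ) * Real.log 2) := by
          rw [Real.exp_nat_mul, Real.exp_log (by norm_num)]
      _ ≤ _ := Real.exp_le_exp.mpr hexp
  have e : θ ^ i = Real.exp (-(τ * i)) := by
    rw [hτ, neg_mul, neg_neg, mul_comm, Real.exp_nat_mul, Real.exp_log hθ]
  rw [e]
  calc _ ≤ Real.exp (τ * i) * Real.exp (-(τ * i)) :=
        mul_le_mul_of_nonneg_right hle (Real.exp_pos _).le
    _ = 1 := by rw [← Real.exp_add]; simp

/-- The uniform bound for all large `m`, for rates slightly above `R` as well. -/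
lemma core {R : ℝ} (hR0 : 0 < R) (hR1 : R < 1) : ∃ R' : ℝ, R < R' ∧
    ∀ᶠ m : ℕ in atTop, ∀ d i : ℕ, d ≤ m → rho m d ≤ R' →
      (weightEnum (ReedMuller m d) i : ℝ) * ((1 - R) ^ (2 * Real.log 2)) ^ i ≤ 1 := by
  set θ : ℝ := (1 - R) ^ (2 * Real.log 2) with hθdef
  have hL : 0 < Real.log 2 := Real.log_pos (by norm_num)
  have hθ : 0 < θ := Real.rpow_pos_of_pos (by linarith) _
  have hθ1 : θ < 1 := Real.rpow_lt_one (by linarith) (by linarith) (by positivity)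
  obtain ⟨l, l0, lR, hl⟩ : ∃ l : ℝ, 0 < l ∧ l < 1 - R ∧ θ < 2 ^ l - 1 := by
    have hcont : ContinuousAt (fun l : ℝ => (2:ℝ) ^ l - 1) (1 - R) :=
      ((Real.hasStrictDerivAt_const_rpow (by norm_num) _).hasDerivAt.sub_const 1).continuousAt
    have h1 : ∀ᶠ l : ℝ in nhdsWithin (1 - R) (Set.Iio (1 - R)), θ < 2 ^ l - 1 :=
      (hcont.eventually (lt_mem_nhds
        (rpow_lt_two_rpow_sub_one (by linarith) (by linarith)))).filter_mono nhdsWithin_le_nhds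
    have h2 : ∀ᶠ l : ℝ in nhdsWithin (1 - R) (Set.Iio (1 - R)), 0 < l :=
      (lt_mem_nhds (by linarith)).filter_mono nhdsWithin_le_nhds
    obtain ⟨l, ⟨ha, hb⟩, hc⟩ := ((h1.and h2).and self_mem_nhdsWithin).exists
    exact ⟨l, hb, hc, ha⟩
  have l1 : l < 1 := by linarith
  refine ⟨(R + (1 - l)) / 2, by linarith, ?_⟩
  obtain ⟨c, hc, hsmall⟩ := hh_small l0 l1 (R' := (R + (1 - l)) / 2) (by linarith) (by linarith)
  have hσ : 0 < Real.log (((2:ℝ) ^ l - 1) / θ) := Real.log_pos ((one_lt_div hθ).mpr hl)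
  filter_upwards [hsmall, small_weight (R' := (R + (1 - l)) / 2) hc hσ hθ hθ1 (by linarith)]
    with m h1 h2 d i hd hrho
  rcases Nat.eq_zero_or_pos i with rfl | hi
  · simpa using weightEnum_zero_le (ReedMuller m d)
  · rcases le_or_gt (Real.log 2 * (2 ^ m * hh m d l))
      (i * Real.log (((2:ℝ) ^ l - 1) / θ)) with h | h
    · exact large_weight l0 l1 hθ h
    · refine h2 d i hd hrho hi (h.trans_le ?_)
      have hh0 : 0 ≤ 2 ^ m * hh m d l := mul_nonneg (by positivity) (hh_nonneg l0.le l1.le)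
      have h4 : Real.log 2 ≤ 1 := by linarith [Real.log_two_lt_d9]
      calc _ ≤ 1 * (2 ^ m * hh m d l) := mul_le_mul_of_nonneg_right h4 hh0
        _ ≤ _ := by rw [one_mul]; exact mul_le_mul_of_nonneg_left (h1 d hrho) (by positivity)

end assembly
end RMW

/-- weight distribution bound for Reed-Muller codes. -/
theorem weight_bound_reed_muller (R : ℝ) (hR0 : 0 < R) (hR1 : R < 1)
    (m d : ℕ → ℕ) (hdm : ∀ k, d k ≤ m k)
    (hm : Filter.Tendsto (fun k => 2 ^ m k) Filter.atTop Filter.atTop)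
    (hrate : Filter.Tendsto (fun k => codeRate (ReedMuller (m k) (d k)))
      Filter.atTop (nhds R)) :
    ∃ Rs : ℕ → ℝ, Filter.Tendsto Rs Filter.atTop (nhds R) ∧
      ∃ K : ℝ, ∀ k, ∀ i ≤ 2 ^ m k,
        (weightEnum (ReedMuller (m k) (d k)) i : ℝ) ≤
          K * (1 - Rs k) ^ (-(2 * Real.log 2 * (i : ℝ))) := by
  refine ⟨fun _ => R, tendsto_const_nhds, ?_⟩
  obtain ⟨R', hRR', hev⟩ := RMW.core hR0 hR1
  have hm' : Tendsto m atTop atTop := tendsto_atTop.mpr fun B =>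
    (hm.eventually_ge_atTop (2 ^ B)).mono fun k h => (Nat.pow_le_pow_iff_right one_lt_two).mp h
  have hr' := hrate.eventually_lt_const hRR'
  obtain ⟨k₀, hk₀⟩ := eventually_atTop.mp ((hm'.eventually hev).and hr')
  have hL : 0 < Real.log 2 := Real.log_pos (by norm_num)
  -- the finitely many remaining codes are absorbed by the constant
  refine ⟨1 + ∑ k ∈ range k₀, ∑ i ∈ range (2 ^ m k + 1),
    (weightEnum (ReedMuller (m k) (d k)) i : ℝ), fun k i hi => ?_⟩
  have hS : 0 ≤ ∑ k ∈ range k₀, ∑ i ∈ range (2 ^ m k + 1),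
      (weightEnum (ReedMuller (m k) (d k)) i : ℝ) := by positivity
  have h1R : 0 < 1 - R := by linarith
  rcases lt_or_ge k k₀ with hk | hk
  · have h1 : (1:ℝ) ≤ (1 - R) ^ (-(2 * Real.log 2 * (i : ℝ))) :=
      Real.one_le_rpow_of_pos_of_le_one_of_nonpos h1R (by linarith)
        (by rw [neg_nonpos]; positivity)
    have h2 : (weightEnum (ReedMuller (m k) (d k)) i : ℝ) ≤
        ∑ k ∈ range k₀, ∑ i ∈ range (2 ^ m k + 1),
          (weightEnum (ReedMuller (m k) (d k)) i : ℝ) := by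
      refine le_trans ?_ (Finset.single_le_sum (f := fun k => ∑ i ∈ range (2 ^ m k + 1),
        (weightEnum (ReedMuller (m k) (d k)) i : ℝ)) (fun _ _ => by positivity)
        (Finset.mem_range.mpr hk))
      exact Finset.single_le_sum (f := fun i => (weightEnum (ReedMuller (m k) (d k)) i : ℝ))
        (fun _ _ => by positivity) (Finset.mem_range.mpr (by omega))
    calc _ ≤ _ := h2
      _ ≤ (1 + ∑ k ∈ range k₀, ∑ i ∈ range (2 ^ m k + 1),
          (weightEnum (ReedMuller (m k) (d k)) i : ℝ)) * 1 := by linarith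
      _ ≤ _ := mul_le_mul_of_nonneg_left h1 (by linarith)
  · obtain ⟨ha, hb⟩ := hk₀ k hk
    rw [RMW.codeRate_RM] at hb
    have h3 := ha (d k) i (hdm k) hb.le
    have hpos : (0:ℝ) < ((1 - R) ^ (2 * Real.log 2)) ^ i :=
      pow_pos (Real.rpow_pos_of_pos h1R _) _
    have e : (1 - R) ^ (-(2 * Real.log 2 * (i : ℝ))) = (((1 - R) ^ (2 * Real.log 2)) ^ i)⁻¹ := by
      rw [Real.rpow_neg h1R.le, Real.rpow_mul h1R.le, Real.rpow_natCast]
    have h4 : (weightEnum (ReedMuller (m k) (d k)) i : ℝ) ≤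
        (1 - R) ^ (-(2 * Real.log 2 * (i : ℝ))) := by
      rw [e, ← one_div, le_div_iff₀ hpos]
      exact h3
    have h5 : 0 ≤ (1 - R) ^ (-(2 * Real.log 2 * (i : ℝ))) := Real.rpow_nonneg h1R.le _
    change _ ≤ _ * (1 - R) ^ (-(2 * Real.log 2 * (i : ℝ)))
    nlinarith
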